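/- Let q, a₁ be integers with q ≥ 2 and a₁² ≤ 4q such that the pair (q, a₁) is ordinary (i.e., β is not a root of unity). If −aₙ = ⌊2·q^{n/2}⌋ for some positive integer n, then (n/4)·log q < 8.87·(10.98·π + (1/2)·log q)·(max{17, 2·log n + 3.27})² + log(π/3). -/

import Mathlib

/-!
The method of Laurent, Mignotte and Nesterenko for linear forms in two logarithms. Since
`(α ^ n - conj α ^ n) ^ 2 = aₙ ^ 2 - 4 q ^ n`, the equality `-aₙ = ⌊2 q ^ (n / 2)⌋` puts the `n`-th
power of `γ = α / conj α`, which is not a root of unity, within `2 q ^ (-n / 4)` of `1`, so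
`γ = exp (i (2 π m + δ) / n)` with `|δ| ≤ π q ^ (-n / 4)` and `m`, `n` coprime.
The functions `z ↦ (z choose k) exp (2 π i l z / n)` then nearly take the values
`(z choose k) γ ^ (l r)` at the integers `z = r m + s n`. A determinant of `K (2 L + 1)` such values
is nonzero for suitable points by a zero estimate, is not too small because it lies in
`ℚ(α)` with a controlled denominator, and is small by the Schwarz lemma. Comparing the two bounds
for well-chosen parameters shows that `n log q` cannot be large.
-/

section InterpolationDeterminants

open Finset Matrix

theorem exists_eq_sum_add_pow_mul {f : ℂ → ℂ} (hf : Differentiable ℂ f) (N : ℕ) :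
    ∃ (a : ℕ → ℂ) (g : ℂ → ℂ), Differentiable ℂ g ∧
      ∀ z, f z = ∑ i ∈ range N, a i * z ^ i + z ^ N * g z := by
  induction N with
  | zero => exact ⟨0, f, hf, by simp⟩
  | succ N ih =>
    obtain ⟨a, g, hg, hfg⟩ := ih
    have hslope : Differentiable ℂ (dslope g 0) :=
      differentiableOn_univ.1 <|
        (Complex.differentiableOn_dslope Filter.univ_mem).2 hg.differentiableOn
    have hg0 (z : ℂ) : g z = g 0 + z * dslope g 0 z := by
      simpa [sub_eq_iff_eq_add'] using (sub_smul_dslope g 0 z).symm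
    refine ⟨Function.update a N (g 0), dslope g 0, hslope, fun z => ?_⟩
    have hlow : ∑ i ∈ range N, Function.update a N (g 0) i * z ^ i = ∑ i ∈ range N, a i * z ^ i :=
      sum_congr rfl fun i hi => by rw [Function.update_of_ne (mem_range.1 hi).ne]
    rw [hfg z, sum_range_succ, hlow, Function.update_self, hg0 z]
    ring

theorem norm_det_le_factorial_mul_prod {ι 𝕜 : Type*} [Fintype ι] [DecidableEq ι] [NormedField 𝕜]
    {M : Matrix ι ι 𝕜} {B : ι → ℝ} (hM : ∀ i j, ‖M i j‖ ≤ B i) :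
    ‖M.det‖ ≤ (Fintype.card ι).factorial * ∏ i, B i := by
  rw [← det_transpose, det_apply, ← Fintype.card_perm, ← nsmul_eq_mul, ← card_univ]
  refine norm_sum_le_of_le _ (fun σ _ => ?_) |>.trans_eq (sum_const _)
  calc ‖Equiv.Perm.sign σ • ∏ i, Mᵀ (σ i) i‖ = ∏ i, ‖M i (σ i)‖ := by
        rcases Int.units_eq_one_or (Equiv.Perm.sign σ) with h | h <;> simp [h, norm_prod]
    _ ≤ ∏ i, B i := prod_le_prod (fun _ _ => norm_nonneg _) fun i _ => hM i (σ i)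

theorem differentiable_matrix_det {ι 𝕜 : Type*} [Fintype ι] [DecidableEq ι]
    [NontriviallyNormedField 𝕜] {M : 𝕜 → Matrix ι ι 𝕜}
    (hM : ∀ i j, Differentiable 𝕜 fun x => M x i j) : Differentiable 𝕜 fun x => (M x).det := by
  simp only [det_apply']
  exact Differentiable.fun_sum fun σ _ =>
    (Differentiable.fun_finsetProd fun i _ => hM (σ i) i).const_mul _

-- Modulo `x ^ N` the matrix is `(aᵢᵥ x ^ v) * (ζⱼ ^ v)`, with `aᵢᵥ` the Taylor coefficients of
-- `φ i`; inverting the Vandermonde factor absorbs the remainder into the columns `x ^ v`.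
theorem exists_det_dilation_eq_pow_mul {N : ℕ} {φ : Fin N → ℂ → ℂ}
    (hφ : ∀ i, Differentiable ℂ (φ i)) {ζ : Fin N → ℂ} (hζ : Function.Injective ζ)
    (E : Matrix (Fin N) (Fin N) ℂ) :
    ∃ H : ℂ → ℂ, Differentiable ℂ H ∧ ∀ x,
      (of fun i j => φ i (x * ζ j) + x ^ N * E i j).det = x ^ (∑ i : Fin N, (i : ℕ)) * H x := by
  choose a g hg hφg using fun i => exists_eq_sum_add_pow_mul (hφ i) N
  set V : Matrix (Fin N) (Fin N) ℂ := (vandermonde ζ)ᵀ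
  have hVdet : IsUnit V.det := by
    rw [det_transpose, isUnit_iff_ne_zero]
    exact det_vandermonde_ne_zero_iff.2 hζ
  let G (x : ℂ) : Matrix (Fin N) (Fin N) ℂ := of fun i j => ζ j ^ N * g i (x * ζ j) + E i j
  let Q (x : ℂ) : Matrix (Fin N) (Fin N) ℂ :=
    of fun i v => a i v + x ^ (N - (v : ℕ)) * (G x * V⁻¹) i v
  have hfactor (x : ℂ) : (of fun i j => φ i (x * ζ j) + x ^ N * E i j) =
      (of fun i v : Fin N => x ^ (v : ℕ) * Q x i v) * V := by
    have hcolumn (i v : Fin N) : x ^ (v : ℕ) * Q x i v =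
        a i v * x ^ (v : ℕ) + x ^ N * (G x * V⁻¹) i v := by
      rw [← pow_mul_pow_sub x v.2.le]
      simp only [Q, of_apply]
      ring
    ext i j
    simp only [hcolumn, mul_apply (M := of _), of_apply, add_mul, sum_add_distrib, mul_assoc,
      ← mul_sum]
    rw [← mul_apply, nonsing_inv_mul_cancel_right _ _ hVdet, hφg i, ← Fin.sum_univ_eq_sum_range]
    simp only [G, V, of_apply, transpose_apply, vandermonde_apply, mul_pow]
    ring
  have hQ : Differentiable ℂ fun x => (Q x).det := by
    refine differentiable_matrix_det fun i v => ?_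
    have := hg i
    simp only [Q, G, of_apply, mul_apply]
    fun_prop
  refine ⟨fun x => (Q x).det * V.det, hQ.mul_const _, fun x => ?_⟩
  rw [hfactor, det_mul, det_mul_row, prod_pow_eq_pow_sum, mul_assoc]

theorem pow_mul_norm_le_of_norm_pow_mul_le_on_sphere {H : ℂ → ℂ} (hH : Differentiable ℂ H)
    {ρ C : ℝ} (hρ : 0 < ρ) (σ : ℕ) (hC : ∀ x, ‖x‖ = ρ → ‖x ^ σ * H x‖ ≤ C) {z : ℂ} (hz : ‖z‖ ≤ ρ) :
    ρ ^ σ * ‖H z‖ ≤ C := by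
  rw [mul_comm, ← le_div_iff₀ (by positivity)]
  refine Complex.norm_le_of_forall_mem_frontier_norm_le (U := Metric.ball 0 ρ)
    Metric.isBounded_ball hH.diffContOnCl (fun x hx => ?_) ?_
  · rw [frontier_ball _ hρ.ne', mem_sphere_zero_iff_norm] at hx
    rw [le_div_iff₀ (by positivity), mul_comm, ← hx, ← norm_pow, ← norm_mul]
    exact hC x hx
  · rwa [closure_ball _ hρ.ne', mem_closedBall_zero_iff]

theorem pow_choose_two_mul_norm_det_le {ι : Type*} [Fintype ι] [DecidableEq ι] {φ : ι → ℂ → ℂ}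
    (hφ : ∀ i, Differentiable ℂ (φ i)) {ζ : ι → ℂ} (hζ : Function.Injective ζ)
    (E : Matrix ι ι ℂ) {ρ : ℝ} (hρ : 1 ≤ ρ) {B : ι → ℝ}
    (hB : ∀ i j x, ‖x‖ = ρ → ‖φ i (x * ζ j)‖ ≤ B i)
    (hE : ∀ i j, ρ ^ Fintype.card ι * ‖E i j‖ ≤ B i) :
    ρ ^ (Fintype.card ι).choose 2 * ‖(of fun i j => φ i (ζ j) + E i j).det‖ ≤
      (Fintype.card ι).factorial * ∏ i, (2 * B i) := by
  let e := (Fintype.equivFin ι).symm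
  obtain ⟨H, hH, hdet⟩ := exists_det_dilation_eq_pow_mul (fun i => hφ (e i))
    (hζ.comp e.injective) (E.submatrix e e)
  have hσ : ∑ i : Fin (Fintype.card ι), (i : ℕ) = (Fintype.card ι).choose 2 := by
    rw [Fin.sum_univ_eq_sum_range (fun i => i), sum_range_id, Nat.choose_two_right]
  have hone : (of fun i j => φ i (ζ j) + E i j).det = H 1 := by
    rw [← det_submatrix_equiv_self e]
    simpa [submatrix] using hdet 1
  rw [hone]
  refine pow_mul_norm_le_of_norm_pow_mul_le_on_sphere hH (by linarith) _ (fun x hx => ?_) (by simpa)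
  have hdet_le := norm_det_le_factorial_mul_prod (B := fun i => 2 * B (e i))
    (M := of fun i j => φ (e i) (x * ζ (e j)) + x ^ Fintype.card ι * E (e i) (e j)) fun i j => by
      refine (norm_add_le _ _).trans ?_
      rw [norm_mul, norm_pow, hx]
      linarith [hB (e i) (e j) x hx, hE (e i) (e j)]
  rw [← hσ, ← hdet, ← e.prod_comp]
  simpa using hdet_le

theorem exists_det_ne_zero_of_linearIndependent {ι κ 𝕜 : Type*} [Fintype ι] [DecidableEq ι]
    [Field 𝕜] {W : ι → κ → 𝕜} (hW : LinearIndependent 𝕜 W) :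
    ∃ f : ι → κ, (of fun i j => W i (f j)).det ≠ 0 := by
  obtain ⟨κ', f, -, hspan, hf⟩ := exists_linearIndependent' 𝕜 (flip W)
  rw [span_flip_eq_top_iff_linearIndependent.2 hW] at hspan
  let e := (Pi.basisFun 𝕜 ι).indexEquiv (Module.Basis.mk hf hspan.ge)
  refine ⟨f ∘ e, ?_⟩
  rw [← det_transpose]
  exact ((isUnit_iff_isUnit_det _).1
    (linearIndependent_rows_iff_isUnit.1 (hf.comp e e.injective))).ne_zero

end InterpolationDeterminants

section DeterminantsOfPolynomials

open Finset Matrix Polynomial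

variable {R : Type*} [CommRing R]

theorem coeff_prod_sum_of_natDegree_le {ι : Type*} (s : Finset ι) {f : ι → R[X]} {d : ι → ℕ}
    (hf : ∀ i ∈ s, (f i).natDegree ≤ d i) :
    (∏ i ∈ s, f i).coeff (∑ i ∈ s, d i) = ∏ i ∈ s, (f i).coeff (d i) := by
  classical
  induction s using Finset.induction_on with
  | empty => simp
  | insert i s hi ih =>
    have hs : ∀ j ∈ s, (f j).natDegree ≤ d j := fun j hj => hf j (mem_insert_of_mem hj)
    rw [prod_insert hi, prod_insert hi, sum_insert hi, coeff_mul_add_eq_of_natDegree_le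
      (hf i (mem_insert_self i s)) ((natDegree_prod_le s f).trans (sum_le_sum hs)), ih hs]

variable {ι : Type*} [Fintype ι] [DecidableEq ι] {M : Matrix ι ι R[X]} {d : ι → ℕ}

theorem natDegree_det_le_sum (hM : ∀ i j, (M i j).natDegree ≤ d j) :
    M.det.natDegree ≤ ∑ j, d j := by
  rw [det_apply]
  refine natDegree_sum_le_of_forall_le _ _ fun σ _ => ?_
  rw [Units.smul_def]
  exact (natDegree_smul_le _ _).trans <|
    (natDegree_prod_le _ _).trans (sum_le_sum fun j _ => hM (σ j) j)

theorem coeff_det_sum (hM : ∀ i j, (M i j).natDegree ≤ d j) :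
    M.det.coeff (∑ j, d j) = (of fun i j => (M i j).coeff (d j)).det := by
  simp only [det_apply, finsetSum_coeff, Units.smul_def, coeff_smul, of_apply]
  exact sum_congr rfl fun σ _ => by
    rw [coeff_prod_sum_of_natDegree_le univ fun j _ => hM (σ j) j]

end DeterminantsOfPolynomials

section ZeroEstimate

open Finset Matrix Polynomial

variable {R : Type*} [CommRing R] {t : ℕ}

/-- The matrix whose row `i` is the shift by `i` steps of length `h` of the exponential polynomials
`(w j) ^ i * (p j) (x + i h)`, as polynomials in the base point `x`. -/
noncomputable def casoratianMatrix (w : Fin t → R) (p : Fin t → R[X]) (h : R) :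
    Matrix (Fin t) (Fin t) R[X] :=
  of fun i j => C (w j ^ (i : ℕ)) * taylor ((i : ℕ) * h) (p j)

theorem natDegree_casoratianMatrix_le (w : Fin t → R) (p : Fin t → R[X]) (h : R) (i j : Fin t) :
    (casoratianMatrix w p h i j).natDegree ≤ (p j).natDegree :=
  (natDegree_C_mul_le _ _).trans (natDegree_taylor (p j) _).le

theorem coeff_det_casoratianMatrix (w : Fin t → R) (p : Fin t → R[X]) (h : R) :
    (casoratianMatrix w p h).det.coeff (∑ j, (p j).natDegree) =
      (∏ j, (p j).leadingCoeff) * (vandermonde w).det := by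
  rw [coeff_det_sum (natDegree_casoratianMatrix_le w p h), ← det_transpose (vandermonde w),
    ← det_mul_row]
  congr! 3 with i j
  simp only [casoratianMatrix, of_apply, coeff_C_mul, coeff_taylor_natDegree, transpose_apply,
    vandermonde_apply, mul_comm]

variable [IsDomain R]

theorem det_casoratianMatrix_ne_zero {w : Fin t → R} (hw : Function.Injective w)
    {p : Fin t → R[X]} (hp : ∀ j, p j ≠ 0) (h : R) : (casoratianMatrix w p h).det ≠ 0 := by
  intro hzero
  have hcoeff := coeff_det_casoratianMatrix w p h
  rw [hzero, coeff_zero] at hcoeff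
  exact mul_ne_zero (prod_ne_zero_iff.2 fun j _ => leadingCoeff_ne_zero.2 (hp j))
    (det_vandermonde_ne_zero_iff.2 hw) hcoeff.symm

theorem eval_det_casoratianMatrix_eq_zero {w : Fin t → R} {p : Fin t → R[X]} {h x : R}
    {c : Fin t → R} (hc : c ≠ 0)
    (hrel : ∀ i < t, ∑ j, c j * w j ^ i * (p j).eval (x + i * h) = 0) :
    (casoratianMatrix w p h).det.eval x = 0 := by
  rw [← coe_evalRingHom, RingHom.map_det, ← exists_mulVec_eq_zero_iff]
  refine ⟨c, hc, funext fun i => ?_⟩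
  rw [Pi.zero_apply, ← hrel i i.2]
  simp only [mulVec, dotProduct, RingHom.mapMatrix_apply, map_apply, casoratianMatrix, of_apply,
    coe_evalRingHom, eval_mul, eval_C, taylor_eval]
  exact sum_congr rfl fun j _ => by ring

theorem card_le_sum_natDegree_of_exponential_relations (ht : 0 < t) {w : Fin t → R}
    (hw : Function.Injective w) {p : Fin t → R[X]} (hp : ∀ j, p j ≠ 0) (h : R) {Z : Finset R}
    (hZ : ∀ x ∈ Z, ∃ c : Fin t → R, (∀ j, c j ≠ 0) ∧
      ∀ i < t, ∑ j, c j * w j ^ i * (p j).eval (x + i * h) = 0) :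
    #Z ≤ ∑ j, (p j).natDegree := by
  refine le_trans ?_ (natDegree_det_le_sum (natDegree_casoratianMatrix_le w p h))
  by_contra! hlt
  refine det_casoratianMatrix_ne_zero hw hp h (eq_zero_of_natDegree_lt_card_of_eval_eq_zero' _ Z
    (fun x hx => ?_) hlt)
  obtain ⟨c, hc, hrel⟩ := hZ x hx
  exact eval_det_casoratianMatrix_eq_zero (fun h0 => hc ⟨0, ht⟩ (congrFun h0 _)) hrel

theorem eq_zero_of_exponential_relations {ι : Type*} [Fintype ι] {w : ι → R}
    (hw : Function.Injective w) {P : ι → R[X]} {K : ℕ} (hP : ∀ l, (P l).degree < K) (h : R)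
    {Z : Finset R} (hcard : K * Fintype.card ι ≤ #Z)
    (hZ : ∀ x ∈ Z, ∃ c : ι → R, (∀ l, c l ≠ 0) ∧
      ∀ i < Fintype.card ι, ∑ l, c l * w l ^ i * (P l).eval (x + i * h) = 0) : P = 0 := by
  classical
  by_contra hne
  obtain ⟨l₀, hl₀⟩ := Function.ne_iff.1 hne
  let e : Fin (Fintype.card {l // P l ≠ 0}) ≃ {l // P l ≠ 0} := (Fintype.equivFin _).symm
  have hpos : 0 < Fintype.card {l // P l ≠ 0} := Fintype.card_pos_iff.2 ⟨⟨l₀, hl₀⟩⟩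
  have hle : Fintype.card {l // P l ≠ 0} ≤ Fintype.card ι := Fintype.card_subtype_le _
  have hdeg (j) : (P (e j)).natDegree < K := (natDegree_lt_iff_degree_lt (e j).2).2 (hP (e j))
  have hZle := card_le_sum_natDegree_of_exponential_relations hpos
    (w := fun j => w (e j)) (hw.comp (Subtype.val_injective.comp e.injective))
    (p := fun j => P (e j)) (fun j => (e j).2) h fun x hx => by
      obtain ⟨c, hc, hrel⟩ := hZ x hx
      refine ⟨fun j => c (e j), fun j => hc (e j), fun i hi => ?_⟩
      rw [← hrel i (hi.trans_le hle)]
      refine Fintype.sum_of_injective _ (Subtype.val_injective.comp e.injective) _ _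
        (fun l hl => ?_) fun j => rfl
      have hPl : P l = 0 := by
        by_contra hPl
        exact hl ⟨e.symm ⟨l, hPl⟩, by simp⟩
      rw [hPl, eval_zero, mul_zero]
  have hsum : ∑ j, (P (e j)).natDegree < Fintype.card {l // P l ≠ 0} * K := by
    simpa using sum_lt_sum_of_nonempty (univ_nonempty_iff.2 ⟨⟨0, hpos⟩⟩) fun j _ => hdeg j
  have := Nat.mul_le_mul_right K hle
  linarith

end ZeroEstimate

section BinomialPolynomials

open Finset Polynomial

/-- The binomial polynomials `X (X - 1) ⋯ (X - k + 1) / k!`, as a sequence of polynomials indexed by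
their degree. -/
noncomputable def binomPoly (F : Type*) [Field F] [CharZero F] : Polynomial.Sequence F where
  elems' k := C (k.factorial : F)⁻¹ * descPochhammer F k
  degree_eq' k := by
    rw [degree_C_mul (inv_ne_zero (Nat.cast_ne_zero.2 k.factorial_ne_zero)),
      degree_eq_natDegree (monic_descPochhammer F k).ne_zero, descPochhammer_natDegree]

theorem eval_binomPoly {F : Type*} [Field F] [CharZero F] (k : ℕ) (z : F) :
    (binomPoly F k).eval z = (k.factorial : F)⁻¹ * ∏ i ∈ range k, (z - i) := by
  rw [← descPochhammer_eval_eq_prod_range]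
  exact eval_C_mul

theorem eval_intCast_binomPoly {F : Type*} [Field F] [CharZero F] (k : ℕ) (x : ℤ) :
    (binomPoly F k).eval (x : F) = (Ring.choose x k : ℤ) := by
  have := Ring.descPochhammer_eq_factorial_smul_choose x k
  rw [← eval_eq_smeval, descPochhammer_eval_eq_prod_range, nsmul_eq_mul] at this
  rw [eval_binomPoly, inv_mul_eq_iff_eq_mul₀ (Nat.cast_ne_zero.2 k.factorial_ne_zero)]
  exact_mod_cast congrArg (Int.cast : ℤ → F) this

theorem norm_eval_binomPoly_le {𝕜 : Type*} [RCLike 𝕜] (k : ℕ) (z : 𝕜) {b : ℝ}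
    (hz : ‖z‖ + k ≤ b) : ‖(binomPoly 𝕜 k).eval z‖ ≤ b ^ k / k.factorial := by
  rw [eval_binomPoly, norm_mul, norm_inv, RCLike.norm_natCast, norm_prod, div_eq_inv_mul]
  gcongr
  refine (prod_le_prod (fun _ _ => norm_nonneg _) fun i hi => ?_).trans_eq
    (prod_const b |>.trans (by rw [card_range]))
  have hik : (i : ℝ) ≤ k := by exact_mod_cast (mem_range.1 hi).le
  calc ‖z - i‖ ≤ ‖z‖ + ‖(i : 𝕜)‖ := norm_sub_le _ _
    _ ≤ b := by rw [RCLike.norm_natCast]; linarith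

theorem degree_sum_smul_sequence_lt {R : Type*} [Semiring R] (S : Polynomial.Sequence R) {K : ℕ}
    (c : Fin K → R) : (∑ k, c k • S k).degree < K :=
  mem_degreeLT.1 <| Submodule.sum_mem _ fun k _ => Submodule.smul_mem _ _ <|
    mem_degreeLT.2 <| by simp

end BinomialPolynomials

section ImaginaryQuadraticIntegers

open Finset Matrix ComplexConjugate

theorem exists_eq_add_mul_of_mem_adjoin {R : Type*} [CommRing R] {α : R} {a q : ℤ}
    (hα : α ^ 2 = a * α - q) {z : R} (hz : z ∈ Algebra.adjoin ℤ {α}) :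
    ∃ u v : ℤ, z = u + v * α := by
  induction hz using Algebra.adjoin_induction with
  | mem x hx => exact ⟨0, 1, by simpa using hx⟩
  | algebraMap r => exact ⟨r, 0, by simp⟩
  | add x y _ _ hx hy =>
    obtain ⟨⟨u, v, rfl⟩, u', v', rfl⟩ := hx, hy
    exact ⟨u + u', v + v', by push_cast; ring⟩
  | mul x y _ _ hx hy =>
    obtain ⟨⟨u, v, rfl⟩, u', v', rfl⟩ := hx, hy
    exact ⟨u * u' - v * v' * q, u * v' + v * u' + v * v' * a, by
      push_cast; linear_combination (v * v' : R) * hα⟩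

variable {α : ℂ} {a q : ℤ}

theorem one_le_norm_of_mem_adjoin (hnorm : α * conj α = q) (htrace : α + conj α = a) {z : ℂ}
    (hz : z ∈ Algebra.adjoin ℤ {α}) (hz0 : z ≠ 0) : 1 ≤ ‖z‖ := by
  obtain ⟨u, v, rfl⟩ := exists_eq_add_mul_of_mem_adjoin
    (by rw [← hnorm, ← htrace]; ring : α ^ 2 = a * α - q) hz
  have hnormSq : ((u ^ 2 + u * v * a + v ^ 2 * q : ℤ) : ℝ) = ‖(u + v * α : ℂ)‖ ^ 2 := by
    apply Complex.ofReal_injective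
    rw [← Complex.normSq_eq_norm_sq, ← Complex.mul_conj]
    simp only [map_add, map_mul, map_intCast]
    push_cast
    rw [← htrace, ← hnorm]
    ring
  have hpos : 0 < u ^ 2 + u * v * a + v ^ 2 * q := by
    rw [← Int.cast_pos (R := ℝ), hnormSq]
    have := norm_pos_iff.2 hz0
    positivity
  refine (one_le_sq_iff₀ (norm_nonneg _)).1 ?_
  rw [← hnormSq]
  exact_mod_cast hpos

theorem conj_mem_adjoin (htrace : α + conj α = a) : conj α ∈ Algebra.adjoin ℤ {α} := by
  rw [eq_sub_of_add_eq' htrace]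
  exact sub_mem (intCast_mem _ a) (Algebra.self_mem_adjoin_singleton ℤ α)

theorem pow_mul_div_conj_zpow_mem_adjoin (hnorm : α * conj α = q) (htrace : α + conj α = a)
    (hq : q ≠ 0) {d : ℕ} {e : ℤ} (he : |e| ≤ d) :
    (q : ℂ) ^ d * (α / conj α) ^ e ∈ Algebra.adjoin ℤ {α} := by
  obtain ⟨hα, hα'⟩ : α ≠ 0 ∧ conj α ≠ 0 := by
    rw [← mul_ne_zero_iff, hnorm]
    exact_mod_cast hq
  obtain ⟨h₁, h₂⟩ := abs_le.1 he
  obtain ⟨u, hu⟩ := Int.eq_ofNat_of_zero_le (by lia : 0 ≤ d + e)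
  obtain ⟨v, hv⟩ := Int.eq_ofNat_of_zero_le (by lia : 0 ≤ d - e)
  have : (q : ℂ) ^ d * (α / conj α) ^ e = α ^ u * conj α ^ v := by
    rw [← zpow_natCast α u, ← zpow_natCast (conj α) v, ← hu, ← hv, zpow_add₀ hα, zpow_sub₀ hα',
      ← hnorm, div_zpow, zpow_natCast, zpow_natCast, mul_pow]
    field_simp
  rw [this]
  exact mul_mem (pow_mem (Algebra.self_mem_adjoin_singleton ℤ α) u)
    (pow_mem (conj_mem_adjoin htrace) v)

theorem one_le_prod_pow_mul_norm_det (hnorm : α * conj α = q) (htrace : α + conj α = a)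
    (hq : 0 < q) {ι : Type*} [Fintype ι] [DecidableEq ι] {b e : ι → ι → ℤ} {d : ι → ℕ}
    (he : ∀ i j, |e i j| ≤ d i) (hdet : (of fun i j => b i j * (α / conj α) ^ e i j).det ≠ 0) :
    1 ≤ (∏ i, (q : ℝ) ^ d i) * ‖(of fun i j => b i j * (α / conj α) ^ e i j).det‖ := by
  set M : Matrix ι ι ℂ := of fun i j => b i j * (α / conj α) ^ e i j with hM
  have hscale := det_mul_column (fun i => (q : ℂ) ^ d i) M
  have hmem : (of fun i j => (q : ℂ) ^ d i * M i j).det ∈ Algebra.adjoin ℤ {α} := by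
    rw [det_apply]
    refine sum_mem fun σ _ => ?_
    rw [Units.smul_def]
    refine zsmul_mem (prod_mem fun j _ => ?_) _
    rw [of_apply, hM, of_apply, mul_left_comm]
    exact mul_mem (intCast_mem _ _) (pow_mul_div_conj_zpow_mem_adjoin hnorm htrace hq.ne' (he _ j))
  have hq0 : ∏ i, (q : ℂ) ^ d i ≠ 0 :=
    prod_ne_zero_iff.2 fun i _ => pow_ne_zero _ (Int.cast_ne_zero.2 hq.ne')
  have hqnorm : ‖(q : ℂ)‖ = q := by rw [Complex.norm_intCast, abs_of_pos (Int.cast_pos.2 hq)]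
  have hone := one_le_norm_of_mem_adjoin hnorm htrace hmem (hscale ▸ mul_ne_zero hq0 hdet)
  rwa [hscale, norm_mul, norm_prod, prod_congr rfl fun i _ => norm_pow (q : ℂ) (d i),
    hqnorm] at hone

/-- `α` is a root of `X² - a X + q` with complex conjugate root `conj α`, and the pair `(q, a)` is
ordinary: since `α / conj α = (α / √q) ^ 2`, the last condition says that `α / √q` is not a root of
unity. -/
structure IsOrdinaryRoot (q a : ℤ) (α : ℂ) : Prop where
  mul_conj : α * conj α = q
  add_conj : α + conj α = a
  not_isOfFinOrder : ¬ IsOfFinOrder (α / conj α)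

end ImaginaryQuadraticIntegers

section AuxiliaryDeterminant

open Finset Matrix Polynomial ComplexConjugate

theorem zpow_right_injective_of_not_isOfFinOrder {G₀ : Type*} [GroupWithZero G₀] {γ : G₀}
    (hγ0 : γ ≠ 0) (hγ : ¬ IsOfFinOrder γ) : Function.Injective fun l : ℤ => γ ^ l := by
  lift γ to G₀ˣ using hγ0.isUnit
  have := Units.val_injective.comp
    (injective_zpow_iff_not_isOfFinOrder.2 (mt Units.isOfFinOrder_val.2 hγ))
  simpa only [Function.comp_def, Units.val_zpow_eq_zpow_val] using this

theorem eq_and_eq_of_mul_add_mul_eq {m n r s r' s' : ℤ} (hmn : IsCoprime m n)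
    (hr : |r - r'| < n) (h : r * m + s * n = r' * m + s' * n) : r = r' ∧ s = s' := by
  have hdvd : n ∣ (r - r') * m := ⟨s' - s, by linear_combination h⟩
  have hrr : r = r' :=
    sub_eq_zero.1 <| Int.eq_zero_of_abs_lt_dvd (hmn.symm.dvd_of_dvd_mul_right hdvd) hr
  have hn : n ≠ 0 := ((abs_nonneg _).trans_lt hr).ne'
  subst hrr
  exact ⟨rfl, mul_right_cancel₀ hn (add_left_cancel h)⟩

/-- The integers of absolute value at most `a`: the index set of the exponents and of the
interpolation points. -/
noncomputable abbrev symIcc (a : ℕ) : Finset ℤ := Icc (-a : ℤ) a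

theorem card_symIcc (a : ℕ) : #(symIcc a) = 2 * a + 1 := by
  rw [Int.card_Icc]; lia

theorem abs_le_of_mem_symIcc {a : ℕ} {x : ℤ} (hx : x ∈ symIcc a) : |x| ≤ a :=
  abs_le.2 (mem_Icc.1 hx)

variable {K L R S n : ℕ} {m : ℤ}

/-- The interpolation point `x = r m + s n` attached to the pair `p = (r, s)`. -/
def latticePoint (m : ℤ) (n : ℕ) (p : symIcc R × symIcc S) : ℤ := p.1 * m + p.2 * n

/-- The value at the point `x = r m + s n` of the function indexed by `(k, l)`, namely
`(x choose k) γ ^ (l r)`. -/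
noncomputable def interpolationValue (γ : ℂ) (m : ℤ) (n : ℕ) (i : Fin K × symIcc L)
    (p : symIcc R × symIcc S) : ℂ :=
  (Ring.choose (latticePoint m n p) (i.1 : ℕ) : ℤ) * γ ^ ((i.2 : ℤ) * p.1)

theorem latticePoint_injective (hmn : IsCoprime m n) (hR : 2 * R + 1 ≤ n) :
    Function.Injective (latticePoint m n : symIcc R × symIcc S → ℤ) := by
  rintro ⟨⟨r, hr⟩, ⟨s, hs⟩⟩ ⟨⟨r', hr'⟩, ⟨s', hs'⟩⟩ h
  rw [mem_Icc] at hr hr'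
  obtain ⟨rfl, rfl⟩ := eq_and_eq_of_mul_add_mul_eq hmn (abs_lt.2 ⟨by lia, by lia⟩) h
  rfl

theorem abs_latticePoint_le (hm : 2 * |m| ≤ n) (p : symIcc R × symIcc S) :
    (|latticePoint m n p| : ℝ) ≤ n * (R / 2 + S) := by
  have hr : (|p.1| : ℝ) ≤ R := by exact_mod_cast abs_le_of_mem_symIcc p.1.2
  have hs : (|p.2| : ℝ) ≤ S := by exact_mod_cast abs_le_of_mem_symIcc p.2.2
  have hm' : 2 * (|m| : ℝ) ≤ n := by exact_mod_cast hm
  rw [latticePoint]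
  push_cast
  calc |(p.1 * m + p.2 * n : ℝ)| ≤ |(p.1 : ℝ)| * |(m : ℝ)| + |(p.2 : ℝ)| * n := by
        refine (abs_add_le _ _).trans_eq ?_
        rw [abs_mul, abs_mul, Nat.abs_cast]
    _ ≤ R * (n / 2) + S * n := by gcongr; linarith
    _ = n * (R / 2 + S) := by ring

theorem card_image_lattice {R₁ : ℕ} (hmn : IsCoprime m n) (hR₁ : 2 * R₁ + 1 ≤ n) (r₀ : ℤ) :
    #((Icc r₀ (r₀ + 2 * R₁) ×ˢ symIcc S).image fun p => ((p.1 * m + p.2 * n : ℤ) : ℂ)) =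
      (2 * R₁ + 1) * (2 * S + 1) := by
  rw [card_image_of_injOn, card_product, card_symIcc, Int.card_Icc]
  · congr 1
    lia
  · rintro ⟨r, s⟩ h ⟨r', s'⟩ h' heq
    simp only [coe_product, Set.mem_prod, mem_coe, mem_Icc] at h h'
    obtain ⟨rfl, rfl⟩ := eq_and_eq_of_mul_add_mul_eq hmn (abs_lt.2 ⟨by lia, by lia⟩)
      (Int.cast_injective heq)
    rfl

theorem linearIndependent_interpolationValue {γ : ℂ} (hγ0 : γ ≠ 0) (hγ : ¬ IsOfFinOrder γ)
    (hmn : IsCoprime m n) {R₁ : ℕ} (hR : L + R₁ ≤ R) (hR₁ : 2 * R₁ + 1 ≤ n)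
    (hcard : K * (2 * L + 1) ≤ (2 * R₁ + 1) * (2 * S + 1)) :
    LinearIndependent ℂ
      (interpolationValue γ m n : Fin K × symIcc L → symIcc R × symIcc S → ℂ) := by
  rw [Fintype.linearIndependent_iff]
  intro g hg
  let P (l : symIcc L) : ℂ[X] := ∑ k, g (k, l) • binomPoly ℂ (k : Fin K)
  have hrelation (r s : ℤ) (hr : r ∈ symIcc R) (hs : s ∈ symIcc S) :
      ∑ l : symIcc L, γ ^ ((l : ℤ) * r) * (P l).eval ((r * m + s * n : ℤ) : ℂ) = 0 := by
    have := congrFun hg (⟨r, hr⟩, ⟨s, hs⟩)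
    rw [Finset.sum_apply, Fintype.sum_prod_type, sum_comm] at this
    refine (sum_congr rfl fun l _ => ?_).trans this
    rw [eval_finsetSum, mul_sum]
    refine sum_congr rfl fun k _ => ?_
    rw [eval_smul, eval_intCast_binomPoly, Pi.smul_apply, interpolationValue, latticePoint,
      smul_eq_mul, smul_eq_mul]
    ring
  have hP : P = 0 := by
    refine eq_zero_of_exponential_relations (w := fun l : symIcc L => γ ^ (l : ℤ))
      ((zpow_right_injective_of_not_isOfFinOrder hγ0 hγ).comp Subtype.val_injective)
      (fun l => degree_sum_smul_sequence_lt (binomPoly ℂ) _) m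
      (Z := (Icc (-R : ℤ) (-R + 2 * R₁) ×ˢ symIcc S).image fun p => ((p.1 * m + p.2 * n : ℤ) : ℂ))
      ?_ fun x hx => ?_
    · rwa [card_image_lattice hmn hR₁, Fintype.card_coe, card_symIcc]
    · obtain ⟨⟨r, s⟩, hrs, rfl⟩ := mem_image.1 hx
      obtain ⟨hr, hs⟩ := mem_product.1 hrs
      refine ⟨fun l => γ ^ ((l : ℤ) * r), fun l => zpow_ne_zero _ hγ0, fun i hi => ?_⟩
      rw [Fintype.card_coe, card_symIcc] at hi
      rw [mem_Icc] at hr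
      rw [← hrelation (r + i) s (mem_Icc.2 ⟨by lia, by lia⟩) hs]
      refine sum_congr rfl fun l _ => ?_
      rw [← zpow_natCast, ← _root_.zpow_mul, ← zpow_add₀ hγ0, ← mul_add]
      congr 2
      push_cast
      ring
  rintro ⟨k, l⟩
  exact Fintype.linearIndependent_iff.1
    ((binomPoly ℂ).linearIndependent.comp _ Fin.val_injective) _ (congrFun hP l) k

end AuxiliaryDeterminant

section NearRootsOfUnity

open Finset Matrix Polynomial ComplexConjugate
open scoped Real

variable {K L R S n : ℕ} {m : ℤ}

/-- `γ = exp (i (2 π m + δ) / n)` where `m / n` is a fraction in lowest terms and of absolute value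
at most `1 / 2`. For small `δ` this says that `γ` is close to the root of unity
`exp (2 π i m / n)`. -/
structure IsNearRootOfUnity (γ : ℂ) (n : ℕ) (m : ℤ) (δ : ℝ) : Prop where
  pos : 0 < n
  coprime : IsCoprime m n
  two_mul_abs_le : 2 * |m| ≤ n
  eq_exp : γ = Complex.exp (Complex.I * ((2 * π * m + δ) / n : ℝ))

/-- The entire function `z ↦ (z choose k) exp (2 π i l z / n)`, which nearly takes the values
`interpolationValue γ m n (k, l)` at the lattice points when `γ` is close to `exp (2 π i m / n)`. -/
noncomputable def interpolationFunction (n k : ℕ) (l : ℤ) (z : ℂ) : ℂ :=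
  (binomPoly ℂ k).eval z * Complex.exp (Complex.I * (2 * π * l / n : ℝ) * z)

theorem differentiable_interpolationFunction (n k : ℕ) (l : ℤ) :
    Differentiable ℂ (interpolationFunction n k l) := by
  unfold interpolationFunction
  fun_prop

/-- An upper bound for `interpolationFunction n k l` on the disc of radius `n T`, valid for
`k ≤ K`. -/
noncomputable def interpolationBound (n K : ℕ) (T : ℝ) (k : ℕ) (l : ℤ) : ℝ :=
  (n * T + K) ^ k / k.factorial * Real.exp (2 * π * T * |(l : ℝ)|)

theorem interpolationBound_pos (hK : 0 < K) {T : ℝ} (hT : 0 ≤ T) (k : ℕ) (l : ℤ) :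
    0 < interpolationBound n K T k l := by
  unfold interpolationBound
  positivity

theorem norm_interpolationFunction_le (hn : 0 < n) {k : ℕ} (hk : k ≤ K) (l : ℤ) {T : ℝ} {z : ℂ}
    (hz : ‖z‖ ≤ n * T) :
    ‖interpolationFunction n k l z‖ ≤ interpolationBound n K T k l := by
  have hk' : (k : ℝ) ≤ K := by exact_mod_cast hk
  rw [interpolationFunction, interpolationBound, norm_mul]
  refine mul_le_mul (norm_eval_binomPoly_le k z (by linarith)) ?_ (norm_nonneg _)
    (div_nonneg (pow_nonneg (by linarith [norm_nonneg z]) k) (Nat.cast_nonneg _))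
  rw [Complex.norm_exp]
  refine Real.exp_le_exp.2 ((Complex.re_le_norm _).trans ?_)
  rw [norm_mul, norm_mul, Complex.norm_I, one_mul, Complex.norm_real, Real.norm_eq_abs, abs_div,
    abs_mul, Nat.abs_cast, abs_of_pos Real.two_pi_pos]
  calc 2 * π * |(l : ℝ)| / n * ‖z‖ ≤ 2 * π * |(l : ℝ)| / n * (n * T) := by gcongr
    _ = 2 * π * T * |(l : ℝ)| := by field_simp

namespace IsNearRootOfUnity

variable {γ : ℂ} {δ : ℝ} (h : IsNearRootOfUnity γ n m δ)

include h

theorem interpolationValue_eq (i : Fin K × symIcc L) (p : symIcc R × symIcc S) :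
    interpolationValue γ m n i p = interpolationFunction n i.1 i.2 (latticePoint m n p) *
      Complex.exp (Complex.I * (i.2 * p.1 * δ / n : ℝ)) := by
  have hn : (n : ℂ) ≠ 0 := by exact_mod_cast h.pos.ne'
  rw [interpolationValue, interpolationFunction, eval_intCast_binomPoly, mul_assoc,
    ← Complex.exp_add, h.eq_exp, ← Complex.exp_int_mul]
  congr 1
  rw [Complex.exp_eq_exp_iff_exists_int]
  refine ⟨-(i.2 * p.2), ?_⟩
  rw [latticePoint]
  push_cast
  field_simp
  ring

theorem norm_interpolationValue_sub_le (i : Fin K × symIcc L) (p : symIcc R × symIcc S) :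
    ‖interpolationValue γ m n i p - interpolationFunction n i.1 i.2 (latticePoint m n p)‖ ≤
      ‖interpolationFunction n i.1 i.2 (latticePoint m n p)‖ * (L * R * |δ| / n) := by
  have hl : (|i.2| : ℝ) ≤ L := by exact_mod_cast abs_le_of_mem_symIcc i.2.2
  have hr : (|p.1| : ℝ) ≤ R := by exact_mod_cast abs_le_of_mem_symIcc p.1.2
  rw [h.interpolationValue_eq, ← mul_sub_one, norm_mul]
  gcongr
  refine Real.norm_exp_I_mul_ofReal_sub_one_le.trans ?_
  rw [Real.norm_eq_abs, abs_div, abs_mul, abs_mul, Nat.abs_cast]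
  gcongr

theorem pow_choose_two_mul_norm_det_interpolationValue_le (hRn : 2 * R + 1 ≤ n) {ρ : ℝ}
    (hρ : 1 ≤ ρ) (hδ : ρ ^ (K * (2 * L + 1)) * (L * R * |δ|) ≤ n)
    {f : Fin K × symIcc L → symIcc R × symIcc S} (hf : Function.Injective f) :
    ρ ^ (K * (2 * L + 1)).choose 2 * ‖(of fun i j => interpolationValue γ m n i (f j)).det‖ ≤
      (K * (2 * L + 1)).factorial * ∏ i : Fin K × symIcc L,
        (2 * interpolationBound n K (ρ * (R / 2 + S)) i.1 i.2) := by
  have hn : (0 : ℝ) < n := by exact_mod_cast h.pos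
  let φ (i : Fin K × symIcc L) : ℂ → ℂ := interpolationFunction n i.1 i.2
  let ζ (j : Fin K × symIcc L) : ℂ := (latticePoint m n (f j) : ℤ)
  have hN : Fintype.card (Fin K × symIcc L) = K * (2 * L + 1) := by
    rw [Fintype.card_prod, Fintype.card_fin, Fintype.card_coe, card_symIcc]
  have hζ (j) : ‖ζ j‖ ≤ n * (R / 2 + S) := by
    rw [Complex.norm_intCast]
    exact abs_latticePoint_le h.two_mul_abs_le (f j)
  have hφ (i : Fin K × symIcc L) {z : ℂ} (hz : ‖z‖ ≤ n * (ρ * (R / 2 + S))) :=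
    norm_interpolationFunction_le h.pos i.1.is_lt.le i.2 hz
  have hdet := pow_choose_two_mul_norm_det_le (φ := φ) (ζ := ζ)
    (fun i => differentiable_interpolationFunction n i.1 i.2)
    (Int.cast_injective.comp ((latticePoint_injective h.coprime hRn).comp hf))
    (of fun i j => interpolationValue γ m n i (f j) - φ i (ζ j)) hρ
    (fun i j x hx => hφ i ?_) fun i j => ?_
  · simpa only [hN, of_apply, φ, ζ, add_sub_cancel] using hdet
  · calc ‖x * ζ j‖ ≤ ρ * (n * (R / 2 + S)) := by rw [norm_mul, hx]; gcongr; exact hζ j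
      _ = n * (ρ * (R / 2 + S)) := by ring
  · rw [hN]
    calc ρ ^ (K * (2 * L + 1)) * ‖interpolationValue γ m n i (f j) - φ i (ζ j)‖
        ≤ ρ ^ (K * (2 * L + 1)) * (‖φ i (ζ j)‖ * (L * R * |δ| / n)) := by
          gcongr
          exact h.norm_interpolationValue_sub_le i (f j)
      _ = ‖φ i (ζ j)‖ * (ρ ^ (K * (2 * L + 1)) * (L * R * |δ|) / n) := by ring
      _ ≤ ‖φ i (ζ j)‖ := mul_le_of_le_one_right (norm_nonneg _) ((div_le_one hn).2 hδ)
      _ ≤ interpolationBound n K (ρ * (R / 2 + S)) i.1 i.2 := hφ i ((hζ j).trans ?_)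
    gcongr
    exact le_mul_of_one_le_left (by positivity) hρ

end IsNearRootOfUnity

theorem pow_choose_two_le_of_isNearRootOfUnity {α : ℂ} {a q : ℤ} {δ : ℝ}
    (hα : IsOrdinaryRoot q a α) (hq : 0 < q) (h : IsNearRootOfUnity (α / conj α) n m δ)
    {R₁ : ℕ} (hR : L + R₁ ≤ R) (hRn : 2 * R + 1 ≤ n)
    (hcard : K * (2 * L + 1) ≤ (2 * R₁ + 1) * (2 * S + 1)) {ρ : ℝ} (hρ : 1 ≤ ρ)
    (hδ : ρ ^ (K * (2 * L + 1)) * (L * R * |δ|) ≤ n) :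
    ρ ^ (K * (2 * L + 1)).choose 2 ≤
      (∏ i : Fin K × symIcc L, (q : ℝ) ^ ((i.2 : ℤ).natAbs * R)) *
        ((K * (2 * L + 1)).factorial * ∏ i : Fin K × symIcc L,
          (2 * interpolationBound n K (ρ * (R / 2 + S)) i.1 i.2)) := by
  have hα0 : α / conj α ≠ 0 := by rw [h.eq_exp]; exact Complex.exp_ne_zero _
  obtain ⟨f, hf⟩ := exists_det_ne_zero_of_linearIndependent
    (linearIndependent_interpolationValue (S := S) hα0 hα.not_isOfFinOrder h.coprime hR (by lia)
      hcard)
  have hf_inj : Function.Injective f := fun j j' hjj' => by_contra fun hne =>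
    hf (det_zero_of_column_eq hne fun i => by simp only [of_apply, hjj'])
  have hlower := one_le_prod_pow_mul_norm_det hα.mul_conj hα.add_conj hq
    (e := fun i j => (i.2 : ℤ) * (f j).1) (d := fun i => (i.2 : ℤ).natAbs * R)
    (fun i j => by
      rw [abs_mul, Nat.cast_mul, Int.natCast_natAbs]
      gcongr
      exact abs_le_of_mem_symIcc (f j).1.2) hf
  calc ρ ^ (K * (2 * L + 1)).choose 2
      ≤ ρ ^ (K * (2 * L + 1)).choose 2 *
          ((∏ i : Fin K × symIcc L, (q : ℝ) ^ ((i.2 : ℤ).natAbs * R)) *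
            ‖(of fun i j => interpolationValue (α / conj α) m n i (f j)).det‖) :=
        le_mul_of_one_le_right (by positivity) hlower
    _ = (∏ i : Fin K × symIcc L, (q : ℝ) ^ ((i.2 : ℤ).natAbs * R)) *
          (ρ ^ (K * (2 * L + 1)).choose 2 *
            ‖(of fun i j => interpolationValue (α / conj α) m n i (f j)).det‖) := by ring
    _ ≤ _ := mul_le_mul_of_nonneg_left
        (h.pow_choose_two_mul_norm_det_interpolationValue_le hRn hρ hδ hf_inj) (by positivity)

end NearRootsOfUnity

section LogarithmicInequality

open Finset Matrix Polynomial ComplexConjugate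
open scoped Real

theorem log_factorial_le (n : ℕ) : Real.log n.factorial ≤ n * Real.log n := by
  rw [← Real.log_pow]
  exact Real.log_le_log (by positivity) (by exact_mod_cast n.factorial_le_pow)

theorem sum_mul_log_sub_log_factorial_le {K : ℕ} {Y : ℝ} (hY : K ≤ Y) :
    ∑ k ∈ range K, (k * Real.log Y - Real.log k.factorial) ≤
      (K : ℝ) ^ 2 / 2 * (Real.log Y - Real.log K + 3 / 2) := by
  induction K with
  | zero => simp
  | succ k ih =>
    push_cast at hY
    have hlogY : Real.log (k + 1) ≤ Real.log Y := Real.log_le_log (by positivity) hY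
    rcases k.eq_zero_or_pos with rfl | hk
    · simp only [Nat.cast_zero, zero_add, Real.log_one] at hlogY
      norm_num
      linarith
    have hk' : (1 : ℝ) ≤ k := by exact_mod_cast hk
    have hstep : Real.log (k + 1) - Real.log k ≤ 1 / k := by
      rw [← Real.log_div (by positivity) (by positivity)]
      refine (Real.log_le_sub_one_of_pos (by positivity)).trans_eq ?_
      field_simp
      ring
    have hstep' : ((k : ℝ) + 1) ^ 2 * (Real.log (k + 1) - Real.log k) ≤ (k : ℝ) + 3 := by
      calc ((k : ℝ) + 1) ^ 2 * (Real.log (k + 1) - Real.log k)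
          ≤ ((k : ℝ) + 1) ^ 2 * (1 / k) := by gcongr
        _ = (k : ℝ) + 2 + 1 / k := by field_simp; ring
        _ ≤ (k : ℝ) + 3 := by linarith [(div_le_one₀ (by positivity)).2 hk']
    have htwo : Real.log 2 ≤ Real.log (k + 1) := Real.log_le_log two_pos (by linarith)
    have hpi : 2 * Real.log 2 ≤ Real.log (2 * π) := by
      rw [Real.log_mul two_ne_zero Real.pi_ne_zero]
      linarith [Real.log_le_log two_pos Real.two_le_pi]
    rw [sum_range_succ]
    push_cast
    linarith [ih (by linarith), Stirling.le_log_factorial_stirling hk.ne', Real.log_two_gt_d9]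

theorem sum_abs_symIcc (a : ℕ) : ∑ l : symIcc a, |((l : ℤ) : ℝ)| = a * (a + 1) := by
  rw [sum_coe_sort (symIcc a) fun l : ℤ => |(l : ℝ)|,
    sum_Icc_of_even_eq_range (fun l => by rw [Int.cast_neg, abs_neg])]
  simp only [Int.cast_natCast, Nat.abs_cast, Int.cast_zero, abs_zero, sub_zero, nsmul_eq_mul]
  have := sum_range_id_mul_two (a + 1)
  rw [← Nat.cast_sum, mul_comm]
  exact_mod_cast this.trans (mul_comm _ _)

variable {K L R S n : ℕ} {m : ℤ}

theorem log_prod_pow_natAbs_mul {q : ℝ} (hq : 0 < q) :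
    Real.log (∏ i : Fin K × symIcc L, q ^ ((i.2 : ℤ).natAbs * R)) =
      K * (L * (L + 1)) * (R * Real.log q) := by
  rw [Real.log_prod fun i _ => (pow_pos hq _).ne', Fintype.sum_prod_type]
  simp only [Real.log_pow, Nat.cast_mul, Nat.cast_natAbs, Int.cast_abs, mul_assoc, ← sum_mul,
    sum_abs_symIcc, sum_const, card_univ, Fintype.card_fin, nsmul_eq_mul]

theorem log_interpolationBound (hK : 0 < K) {T : ℝ} (hT : 0 ≤ T) (k : ℕ) (l : ℤ) :
    Real.log (interpolationBound n K T k l) =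
      (k * Real.log (n * T + K) - Real.log k.factorial) + 2 * π * T * |(l : ℝ)| := by
  rw [interpolationBound, Real.log_mul (by positivity) (Real.exp_ne_zero _),
    Real.log_div (by positivity) (by positivity), Real.log_pow, Real.log_exp]

theorem log_prod_two_mul_interpolationBound_le (hK : 0 < K) {T : ℝ} (hT : 0 ≤ T) :
    Real.log (∏ i : Fin K × symIcc L, (2 * interpolationBound n K T i.1 i.2)) ≤
      K * (2 * L + 1) * Real.log 2 +
        (2 * L + 1) * ((K : ℝ) ^ 2 / 2 * (Real.log (n * T + K) - Real.log K + 3 / 2)) +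
        K * (L * (L + 1)) * (2 * π * T) := by
  have hB (k : ℕ) (l : ℤ) : 0 < 2 * interpolationBound n K T k l :=
    mul_pos two_pos (interpolationBound_pos hK hT k l)
  have hlog (k : ℕ) (l : ℤ) : Real.log (2 * interpolationBound n K T k l) =
      Real.log 2 + (k * Real.log (n * T + K) - Real.log k.factorial) + 2 * π * T * |(l : ℝ)| := by
    rw [Real.log_mul two_ne_zero (interpolationBound_pos hK hT k l).ne',
      log_interpolationBound hK hT, add_assoc]
  rw [Real.log_prod fun i _ => (hB _ _).ne', Fintype.sum_prod_type]
  simp only [hlog, sum_add_distrib, ← mul_sum, sum_abs_symIcc, sum_const, card_univ,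
    Fintype.card_fin, Fintype.card_coe, card_symIcc, nsmul_eq_mul]
  rw [Fin.sum_univ_eq_sum_range fun k : ℕ => k * Real.log (n * T + K) - Real.log k.factorial]
  have := sum_mul_log_sub_log_factorial_le (Y := n * T + K)
    (le_add_of_nonneg_left (by positivity) : (K : ℝ) ≤ n * T + K)
  push_cast
  nlinarith

theorem choose_two_mul_log_le_of_isNearRootOfUnity {α : ℂ} {a q : ℤ} {δ : ℝ}
    (hα : IsOrdinaryRoot q a α) (hq : 0 < q) (h : IsNearRootOfUnity (α / conj α) n m δ)
    (hK : 0 < K) {R₁ : ℕ} (hR : L + R₁ ≤ R) (hRn : 2 * R + 1 ≤ n)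
    (hcard : K * (2 * L + 1) ≤ (2 * R₁ + 1) * (2 * S + 1)) {ρ : ℝ} (hρ : 1 ≤ ρ)
    (hδ : ρ ^ (K * (2 * L + 1)) * (L * R * |δ|) ≤ n) {T N : ℝ}
    (hT : T = ρ * (R / 2 + S)) (hN : N = K * (2 * L + 1)) :
    N * (N - 1) / 2 * Real.log ρ ≤
      K * (L * (L + 1)) * (R * Real.log q + 2 * π * T) + N * (Real.log N + Real.log 2) +
        (2 * L + 1) * ((K : ℝ) ^ 2 / 2 * (Real.log (n * T + K) - Real.log K + 3 / 2)) := by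
  have hq' : (0 : ℝ) < q := by exact_mod_cast hq
  have hT0 : 0 ≤ T := by rw [hT]; positivity
  have hN' : ((K * (2 * L + 1) : ℕ) : ℝ) = N := by rw [hN]; push_cast; ring
  have hlog := Real.log_le_log (by positivity)
    (pow_choose_two_le_of_isNearRootOfUnity hα hq h hR hRn hcard hρ hδ)
  have hprod : ∏ i : Fin K × symIcc L, (2 * interpolationBound n K T i.1 i.2) ≠ 0 :=
    prod_ne_zero_iff.2 fun i _ => (mul_pos two_pos (interpolationBound_pos hK hT0 _ _)).ne'
  have hprod' : ∏ i : Fin K × symIcc L, (q : ℝ) ^ ((i.2 : ℤ).natAbs * R) ≠ 0 :=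
    prod_ne_zero_iff.2 fun i _ => (pow_pos hq' _).ne'
  have hfactorial : (((K * (2 * L + 1)).factorial : ℕ) : ℝ) ≠ 0 := by positivity
  rw [← hT, Real.log_pow, Real.log_mul hprod' (mul_ne_zero hfactorial hprod),
    Real.log_mul hfactorial hprod, log_prod_pow_natAbs_mul hq', Nat.cast_choose_two, hN'] at hlog
  have hlogN := log_factorial_le (K * (2 * L + 1))
  rw [hN'] at hlogN
  have := log_prod_two_mul_interpolationBound_le (n := n) (L := L) hK hT0
  rw [← hN] at this
  linarith

end LogarithmicInequality

section OrdinaryPairs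

open ComplexConjugate
open scoped Real

theorem sq_eq_of_sq_sub_mul_add_eq_zero {a b x : ℝ} (hab : a ^ 2 ≤ 4 * b)
    (hx : x ^ 2 - a * x + b = 0) : x ^ 2 = b := by
  have : (2 * x - a) ^ 2 = 0 := le_antisymm (by linarith) (sq_nonneg _)
  have : 2 * x - a = 0 := pow_eq_zero_iff two_ne_zero |>.1 this
  linear_combination -hx + x * this

theorem add_conj_eq_of_sq_sub_mul_add_eq_zero {a b : ℝ} {z : ℂ} (hz : z ^ 2 - a * z + b = 0)
    (him : z.im ≠ 0) : z + conj z = a := by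
  have h := congrArg Complex.im hz
  simp only [pow_two, Complex.add_im, Complex.sub_im, Complex.mul_im, Complex.ofReal_im,
    Complex.ofReal_re, Complex.zero_im, zero_mul, add_zero] at h
  have : 2 * z.re = a := mul_left_cancel₀ him (by linear_combination h)
  rw [Complex.add_conj, this]

theorem IsOrdinaryRoot.of_sq_sub_mul_add_eq_zero {q a : ℤ} (hq : 0 < q) (ha : a ^ 2 ≤ 4 * q) {α : ℂ}
    (hα : α ^ 2 - a * α + q = 0) (hord : ¬ IsOfFinOrder (α / √q)) : IsOrdinaryRoot q a α := by
  have hq' : (q : ℂ) ≠ 0 := by exact_mod_cast hq.ne'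
  have hsqrt : ((√q : ℝ) : ℂ) ^ 2 = q := by
    exact_mod_cast congrArg ((↑) : ℝ → ℂ) (Real.sq_sqrt (Int.cast_nonneg hq.le : (0 : ℝ) ≤ q))
  have him : α.im ≠ 0 := fun him => hord <| by
    lift α to ℝ using him
    have : α ^ 2 = q := sq_eq_of_sq_sub_mul_add_eq_zero (a := a) (by exact_mod_cast ha)
      (by exact_mod_cast hα)
    refine isOfFinOrder_iff_pow_eq_one.2 ⟨2, two_pos, ?_⟩
    rw [div_pow, hsqrt, div_eq_one_iff_eq hq']
    exact_mod_cast this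
  have hadd : α + conj α = a :=
    add_conj_eq_of_sq_sub_mul_add_eq_zero (a := a) (b := q) (by exact_mod_cast hα) him
  have hmul : α * conj α = q := by linear_combination α * hadd - hα
  refine ⟨hmul, hadd, fun h => hord ?_⟩
  have hα0 : α ≠ 0 := left_ne_zero_of_mul (hmul ▸ hq')
  have hsq : α / conj α = (α / √q) ^ 2 := by
    rw [div_pow, hsqrt, ← hmul]
    field_simp
  rw [hsq] at h
  exact h.of_pow two_ne_zero

theorem two_mul_abs_le_of_abs_two_pi_mul_add_le {m : ℤ} {n : ℕ} {δ : ℝ}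
    (h : |2 * π * m + δ| ≤ n * π) (hδ : |δ| < π) : 2 * |m| ≤ n := by
  have hlt : π * |(2 * m : ℝ)| < π * (n + 1) := by
    calc π * |(2 * m : ℝ)| = |(2 * π * m + δ) - δ| := by
          rw [add_sub_cancel_right, mul_comm 2 π, mul_assoc, abs_mul π, abs_of_pos Real.pi_pos]
      _ ≤ |2 * π * m + δ| + |δ| := abs_sub _ _
      _ < n * π + π := add_lt_add_of_le_of_lt h hδ
      _ = π * (n + 1) := by ring
  have hlt := lt_of_mul_lt_mul_left hlt Real.pi_pos.le
  rw [abs_mul, abs_two] at hlt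
  have : 2 * |m| < n + 1 := by exact_mod_cast hlt
  lia

theorem exists_eq_exp_of_norm_pow_sub_one_lt_two {γ : ℂ} (hγ : ‖γ‖ = 1) {n : ℕ} (hn : 0 < n)
    (hγn : ‖γ ^ n - 1‖ < 2) :
    ∃ (m : ℤ) (δ : ℝ), γ = Complex.exp (Complex.I * ((2 * π * m + δ) / n : ℝ)) ∧
      2 * |m| ≤ n ∧ |δ| ≤ π / 2 * ‖γ ^ n - 1‖ := by
  have hn' : (0 : ℝ) < n := by exact_mod_cast hn
  let x : ℝ := n * γ.arg / (2 * π)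
  obtain ⟨δ, hδ⟩ : ∃ δ, δ = 2 * π * (x - round x) := ⟨_, rfl⟩
  have hsum : n * γ.arg = 2 * π * round x + δ := by
    rw [hδ, ← mul_add, add_sub_cancel]
    simp only [x]
    field_simp
  have hexp : γ = Complex.exp (Complex.I * γ.arg) := by
    simpa [hγ, mul_comm] using (Complex.norm_mul_exp_arg_mul_I γ).symm
  have hpow : γ ^ n = Complex.exp (Complex.I * δ) := by
    have := congrArg ((↑) : ℝ → ℂ) hsum
    rw [hexp, ← Complex.exp_nat_mul, Complex.exp_eq_exp_iff_exists_int]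
    refine ⟨round x, ?_⟩
    push_cast at this
    linear_combination Complex.I * this
  have hδ_half : |δ / 2| ≤ π / 2 := by
    rw [hδ, mul_assoc, mul_div_cancel_left₀ _ two_ne_zero, abs_mul, abs_of_pos Real.pi_pos]
    linarith [mul_le_mul_of_nonneg_left (abs_sub_round x) Real.pi_pos.le]
  have hδ_le : |δ| ≤ π / 2 * ‖γ ^ n - 1‖ := by
    rw [hpow, Complex.norm_exp_I_mul_ofReal_sub_one, Real.norm_eq_abs, abs_mul, abs_two]
    calc |δ| = π * (2 / π * |δ / 2|) := by rw [abs_div, abs_two]; field_simp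
      _ ≤ π * |Real.sin (δ / 2)| := by gcongr; exact Real.mul_abs_le_abs_sin hδ_half
      _ = π / 2 * (2 * |Real.sin (δ / 2)|) := by ring
  refine ⟨round x, δ, ?_, ?_, hδ_le⟩
  · rw [← hsum, mul_div_cancel_left₀ _ hn'.ne']
    exact hexp
  · refine two_mul_abs_le_of_abs_two_pi_mul_add_le (δ := δ) ?_
      (hδ_le.trans_lt (by linarith [mul_lt_mul_of_pos_left hγn (half_pos Real.pi_pos)]))
    rw [← hsum, abs_mul, Nat.abs_cast]
    gcongr
    exact γ.abs_arg_le_pi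

theorem norm_sub_conj_sq_le {z : ℂ} (hz : z + conj z = -⌊2 * ‖z‖⌋) :
    ‖z - conj z‖ ^ 2 ≤ 4 * ‖z‖ := by
  have hre : 2 * z.re = -⌊2 * ‖z‖⌋ := by
    rw [Complex.add_conj] at hz
    exact_mod_cast hz
  have hnorm : ‖z‖ ^ 2 = z.re ^ 2 + z.im ^ 2 := by
    rw [Complex.sq_norm, Complex.normSq_apply]
    ring
  have hle := Int.floor_le (2 * ‖z‖)
  have hlt := Int.lt_floor_add_one (2 * ‖z‖)
  have hfactor : ‖z - conj z‖ ^ 2 = (2 * ‖z‖ - ⌊2 * ‖z‖⌋) * (2 * ‖z‖ + ⌊2 * ‖z‖⌋) := by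
    rw [Complex.sub_conj, norm_mul, Complex.norm_I, mul_one, Complex.norm_real, Real.norm_eq_abs,
      sq_abs]
    linear_combination -4 * hnorm - (2 * z.re - ⌊2 * ‖z‖⌋) * hre
  rw [hfactor]
  calc (2 * ‖z‖ - ⌊2 * ‖z‖⌋) * (2 * ‖z‖ + ⌊2 * ‖z‖⌋) ≤ 1 * (2 * ‖z‖ + 2 * ‖z‖) := by
        gcongr
        linarith
    _ = 4 * ‖z‖ := by ring

namespace IsOrdinaryRoot

variable {q a : ℤ} {α : ℂ} {n : ℕ} (hα : IsOrdinaryRoot q a α) (hq : 2 ≤ q)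

include hα

theorem norm_sq : ‖α‖ ^ 2 = q := by
  rw [← Complex.normSq_eq_norm_sq]
  exact_mod_cast (Complex.mul_conj α).symm.trans hα.mul_conj

theorem div_conj_pow_ne_one (hn : 0 < n) : (α / conj α) ^ n ≠ 1 := fun h =>
  hα.not_isOfFinOrder (isOfFinOrder_iff_pow_eq_one.2 ⟨n, hn, h⟩)

include hq

theorem one_lt_norm : 1 < ‖α‖ := by
  rw [← one_lt_sq_iff₀ (norm_nonneg _), hα.norm_sq]
  exact_mod_cast lt_of_lt_of_le one_lt_two hq

theorem ne_zero : α ≠ 0 := norm_pos_iff.1 (zero_lt_one.trans (hα.one_lt_norm hq))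

theorem norm_div_conj_pow_sub_one (n : ℕ) :
    ‖(α / conj α) ^ n - 1‖ * ‖α‖ ^ n = ‖α ^ n - conj α ^ n‖ := by
  have hα0 : conj α ≠ 0 := (map_ne_zero _).2 (hα.ne_zero hq)
  rw [← Complex.norm_conj α, ← norm_pow, ← norm_mul, div_pow, sub_one_mul,
    div_mul_cancel₀ _ (pow_ne_zero n hα0)]

theorem norm_div_conj_pow_sub_one_sq_mul_le (hn : α ^ n + conj α ^ n = -⌊2 * ‖α‖ ^ n⌋) :
    ‖(α / conj α) ^ n - 1‖ ^ 2 * ‖α‖ ^ n ≤ 4 := by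
  have hpos : 0 < ‖α‖ ^ n := pow_pos (zero_lt_one.trans (hα.one_lt_norm hq)) n
  rw [← norm_pow, ← map_pow] at hn
  have := norm_sub_conj_sq_le hn
  rw [map_pow, norm_pow, ← hα.norm_div_conj_pow_sub_one hq] at this
  exact le_of_mul_le_mul_right (by linarith) hpos

theorem odd_of_eq_neg_floor (hn0 : 0 < n) (hn : α ^ n + conj α ^ n = -⌊2 * ‖α‖ ^ n⌋) : Odd n := by
  by_contra hodd
  obtain ⟨k, rfl⟩ := Nat.not_odd_iff_even.1 hodd
  have hfloor : ⌊2 * ‖α‖ ^ (k + k)⌋ = 2 * q ^ k := by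
    rw [← two_mul, pow_mul, hα.norm_sq]
    exact_mod_cast Int.floor_intCast (R := ℝ) (2 * q ^ k)
  have hsum : α ^ k + conj α ^ k = 0 := by
    refine pow_eq_zero_iff two_ne_zero |>.1 ?_
    rw [hfloor] at hn
    push_cast at hn
    rw [← hα.mul_conj] at hn
    linear_combination hn
  refine hα.div_conj_pow_ne_one hn0 ?_
  have hα0 : conj α ≠ 0 := (map_ne_zero _).2 (hα.ne_zero hq)
  rw [pow_add, div_pow, eq_neg_of_add_eq_zero_left hsum, neg_div, div_self (pow_ne_zero k hα0)]
  norm_num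

theorem le_abs_mul_norm_pow {m : ℤ} {δ : ℝ} {g n : ℕ} (hg : 0 < g) (hn : 0 < n)
    (h : α / conj α = Complex.exp (Complex.I * ((2 * π * (g * m : ℤ) + δ) / (g * n : ℕ) : ℝ))) :
    g ≤ |δ| * ‖α‖ ^ n := by
  have hg' : (0 : ℝ) < g := by exact_mod_cast hg
  have hpow : (α / conj α) ^ n = Complex.exp (Complex.I * (δ / g : ℝ)) := by
    have hgC : (g : ℂ) ≠ 0 := by exact_mod_cast hg.ne'
    have hnC : (n : ℂ) ≠ 0 := by exact_mod_cast hn.ne'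
    rw [h, ← Complex.exp_nat_mul, Complex.exp_eq_exp_iff_exists_int]
    refine ⟨m, ?_⟩
    push_cast
    field_simp
    ring
  have hmem : α ^ n - conj α ^ n ∈ Algebra.adjoin ℤ {α} :=
    sub_mem (pow_mem (Algebra.self_mem_adjoin_singleton ℤ α) n)
      (pow_mem (conj_mem_adjoin hα.add_conj) n)
  have hone : 1 ≤ ‖(α / conj α) ^ n - 1‖ * ‖α‖ ^ n := by
    rw [hα.norm_div_conj_pow_sub_one hq]
    refine one_le_norm_of_mem_adjoin hα.mul_conj hα.add_conj hmem fun h0 => ?_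
    refine hα.div_conj_pow_ne_one hn ?_
    rw [div_pow, sub_eq_zero.1 h0, div_self]
    exact pow_ne_zero n ((map_ne_zero _).2 (hα.ne_zero hq))
  have hle : ‖(α / conj α) ^ n - 1‖ ≤ |δ| / g := by
    rw [hpow]
    refine Real.norm_exp_I_mul_ofReal_sub_one_le.trans_eq ?_
    rw [Real.norm_eq_abs, abs_div, Nat.abs_cast]
  rw [← one_mul (g : ℝ), ← le_div_iff₀ hg', mul_div_right_comm]
  exact hone.trans (by gcongr)

theorem isCoprime_of_sq_mul_norm_pow_le {m : ℤ} {δ : ℝ} (hn : Odd n)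
    (h : α / conj α = Complex.exp (Complex.I * ((2 * π * m + δ) / n : ℝ)))
    (hδ : δ ^ 2 * ‖α‖ ^ n ≤ π ^ 2) : IsCoprime m n := by
  rw [Int.isCoprime_iff_gcd_eq_one]
  by_contra hg1
  obtain ⟨g, hg⟩ : ∃ g, g = m.gcd n := ⟨_, rfl⟩
  obtain ⟨m', hm'⟩ : (g : ℤ) ∣ m := hg ▸ Int.gcd_dvd_left _ _
  obtain ⟨n', hn'⟩ : g ∣ n := Int.natCast_dvd_natCast.1 (hg ▸ Int.gcd_dvd_right _ _)
  obtain ⟨hg_odd, hn'_odd⟩ := Nat.odd_mul.1 (hn' ▸ hn)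
  have hg3 : 3 ≤ g := by
    have : g ≠ 1 := hg ▸ hg1
    obtain ⟨k, rfl⟩ := hg_odd
    lia
  have hg3' : (3 : ℝ) ≤ g := by exact_mod_cast hg3
  have hr := hα.one_lt_norm hq
  rw [hm', hn'] at h
  have hle := hα.le_abs_mul_norm_pow hq (by lia) hn'_odd.pos h
  have hpow_le : ‖α‖ ^ (3 * n') ≤ ‖α‖ ^ n :=
    pow_le_pow_right₀ hr.le (hn' ▸ Nat.mul_le_mul_right n' hg3)
  have hbound : 9 * ‖α‖ ^ n' ≤ π ^ 2 :=
    calc 9 * ‖α‖ ^ n' ≤ (|δ| * ‖α‖ ^ n') ^ 2 * ‖α‖ ^ n' := by gcongr; nlinarith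
      _ = δ ^ 2 * ‖α‖ ^ (3 * n') := by rw [mul_pow, sq_abs]; ring
      _ ≤ δ ^ 2 * ‖α‖ ^ n := by gcongr
      _ ≤ π ^ 2 := hδ
  have hr_le : ‖α‖ ≤ ‖α‖ ^ n' := le_self_pow₀ hr.le hn'_odd.pos.ne'
  have hr_sq : 2 ≤ ‖α‖ ^ 2 := by rw [hα.norm_sq]; exact_mod_cast hq
  have hπ_sq : π ^ 2 < 10 := by nlinarith [Real.pi_pos, Real.pi_lt_d2]
  nlinarith

theorem exists_isNearRootOfUnity (hn0 : 0 < n) (hn : α ^ n + conj α ^ n = -⌊2 * ‖α‖ ^ n⌋) :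
    ∃ m δ, IsNearRootOfUnity (α / conj α) n m δ ∧ |δ| * Real.exp (n / 4 * Real.log q) ≤ π := by
  have hr := hα.one_lt_norm hq
  have hclose := hα.norm_div_conj_pow_sub_one_sq_mul_le hq hn
  have hlt : ‖(α / conj α) ^ n - 1‖ < 2 := by
    have : 1 < ‖α‖ ^ n := one_lt_pow₀ hr hn0.ne'
    by_contra! hge
    have : 4 ≤ ‖(α / conj α) ^ n - 1‖ ^ 2 := by nlinarith
    nlinarith
  have hγ : ‖α / conj α‖ = 1 := by
    rw [norm_div, Complex.norm_conj, div_self (by linarith)]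
  obtain ⟨m, δ, hexp, hm, hδ⟩ := exists_eq_exp_of_norm_pow_sub_one_lt_two hγ hn0 hlt
  have hδ_sq : δ ^ 2 * ‖α‖ ^ n ≤ π ^ 2 := by
    calc δ ^ 2 * ‖α‖ ^ n = |δ| ^ 2 * ‖α‖ ^ n := by rw [sq_abs]
      _ ≤ (π / 2 * ‖(α / conj α) ^ n - 1‖) ^ 2 * ‖α‖ ^ n := by gcongr
      _ = π ^ 2 / 4 * (‖(α / conj α) ^ n - 1‖ ^ 2 * ‖α‖ ^ n) := by ring
      _ ≤ π ^ 2 := by linarith [mul_le_mul_of_nonneg_left hclose (sq_nonneg π)]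
  refine ⟨m, δ, ⟨hn0, hα.isCoprime_of_sq_mul_norm_pow_le hq (hα.odd_of_eq_neg_floor hq hn0 hn)
    hexp hδ_sq, hm, hexp⟩, ?_⟩
  refine (pow_le_pow_iff_left₀ (by positivity) Real.pi_pos.le two_ne_zero).1 ?_
  have hexp_sq : Real.exp (n / 4 * Real.log q) ^ 2 = ‖α‖ ^ n := by
    have hlog : Real.log q = 2 * Real.log ‖α‖ := by
      rw [← hα.norm_sq, Real.log_pow, Nat.cast_ofNat]
    rw [← Real.exp_nat_mul, hlog, ← Real.exp_log (zero_lt_one.trans hr), ← Real.exp_nat_mul,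
      Real.log_exp]
    congr 1
    push_cast
    ring
  rwa [mul_pow, sq_abs, hexp_sq]

end IsOrdinaryRoot

end OrdinaryPairs

section ParameterChoice

open scoped Real

theorem log_le_exp_one_mul_sub_two {x : ℝ} (hx : 0 < x) : Real.log x ≤ Real.exp 1 * x - 2 := by
  have h := Real.log_le_sub_one_of_pos (mul_pos (Real.exp_pos 1) hx)
  rw [Real.log_mul (Real.exp_ne_zero 1) hx.ne', Real.log_exp] at h
  linarith

theorem log_sixteen_mem_Ioo : Real.log 16 ∈ Set.Ioo 2.77258 2.7726 := by
  have h : Real.log 16 = 4 * Real.log 2 := by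
    rw [show (16 : ℝ) = 2 ^ 4 by norm_num, Real.log_pow, Nat.cast_ofNat]
  constructor <;> linarith [Real.log_two_gt_d9, Real.log_two_lt_d9]

theorem mul_sq_le_exp {x : ℝ} (hx : 15 ≤ x) : 42.2 * (2 * x + 3.27) ^ 2 ≤ Real.exp x :=
  calc 42.2 * (2 * x + 3.27) ^ 2 ≤ 282 * x ^ 2 := by nlinarith
    _ ≤ x ^ 8 / (Nat.factorial 8) := by
      have : (15 : ℝ) ^ 6 ≤ x ^ 6 := by gcongr
      norm_num [Nat.factorial] at this ⊢
      nlinarith [sq_nonneg x]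
    _ ≤ Real.exp x := Real.pow_div_factorial_le_exp x (by linarith) 8

/-- The size constraints satisfied by the parameters of the interpolation determinant, as real
numbers: `K`, `R`, `S` are as in `interpolationValue` and `W = 2 * L + 1` is the number of
exponents `l`, while `H`, `X` and `s` are meant to be `2 * log n + 3.27`, `16 * π + log q` and
`√(n * log q / X)`. The Schwarz lemma is applied with ratio `16` of the radii. -/
structure IsParameterChoice (H s X K W R S : ℝ) : Prop where
  le_H : 19.9 ≤ H
  le_s : 4.2118 * H ≤ s
  le_X : 50 ≤ X
  le_W : 0.344 * H - 1 ≤ W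
  W_le : W ≤ 0.344 * H + 1
  R_nonneg : 0 ≤ R
  R_le : R ≤ 1.5 * s
  S_nonneg : 0 ≤ S
  S_le : S ≤ K * W / (5.812 * s) + 1
  mul_le : K * W * Real.log 16 ≤ s ^ 2 * X / 4
  le_mul : 0.999 * (s ^ 2 * X / 4) ≤ K * W * Real.log 16

namespace IsParameterChoice

variable {H s X K W R S : ℝ} (h : IsParameterChoice H s X K W R S)

include h

theorem s_gt : 83.8 < s := by linarith [h.le_H, h.le_s]

theorem W_gt : 5.8 < W := by linarith [h.le_H, h.le_W]

theorem W_le_s : W ≤ 0.0937 * s := by linarith [h.le_H, h.le_s, h.W_le]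

theorem s_mul_X_le : 0.96 * (s * X) ≤ K := by
  have hs := h.s_gt
  have hW := h.W_gt
  obtain ⟨h16, h16'⟩ := log_sixteen_mem_Ioo
  have hK : 0 ≤ K := by
    have : 0 ≤ K * (W * Real.log 16) := by
      have := h.le_X
      rw [← mul_assoc]
      exact le_trans (by positivity) h.le_mul
    exact nonneg_of_mul_nonneg_left this (by nlinarith)
  have hle : s * (0.24975 * (s * X)) ≤ s * (0.2598 * K) :=
    calc s * (0.24975 * (s * X)) = 0.999 * (s ^ 2 * X / 4) := by ring
      _ ≤ K * W * Real.log 16 := h.le_mul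
      _ ≤ K * (0.0937 * s) * 2.7726 := by gcongr; exact h.W_le_s
      _ ≤ s * (0.2598 * K) := by nlinarith
  have := le_of_mul_le_mul_left hle (by linarith)
  linarith

theorem s_le_K : 48 * s ≤ K := by
  nlinarith [h.s_mul_X_le, mul_le_mul_of_nonneg_left h.le_X (by linarith [h.s_gt] : 0 ≤ s)]

theorem K_gt : 4000 < K := by linarith [h.s_gt, h.s_le_K]

theorem mul_W_le : K * W / (5.812 * s) ≤ 0.0162 * K := by
  have hs := h.s_gt
  have hK := h.K_gt
  rw [div_le_iff₀ (by positivity)]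
  nlinarith [mul_le_mul_of_nonneg_left h.W_le_s (by linarith : 0 ≤ K)]

theorem log_mul_add_log_two_le : Real.log (K * W) + Real.log 2 ≤ 0.01 * K := by
  have hK := h.K_gt
  have hW := h.W_gt
  have hlogW := Real.log_le_sub_one_of_pos (by linarith : 0 < W)
  have hlogK := Real.log_le_sub_one_of_pos (by linarith : 0 < K / 256)
  rw [Real.log_div (by positivity) (by norm_num), show (256 : ℝ) = 2 ^ 8 by norm_num,
    Real.log_pow] at hlogK
  rw [Real.log_mul (by positivity) (by positivity)]
  push_cast at hlogK
  linarith [Real.log_two_lt_d9, h.W_le_s, h.s_le_K]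

theorem log_sub_log_le {n : ℝ} (hn : 4096 ≤ n) :
    Real.log (n * (16 * (R / 2 + S)) + K) - Real.log K ≤ Real.log n + 34 / X - 1.28 := by
  have hX := h.le_X
  have hK := h.K_gt
  have hR := h.R_nonneg
  have hS := h.S_nonneg
  have hsX : s ≤ K / (0.96 * X) := by
    rw [le_div_iff₀ (by positivity)]
    linarith [h.s_mul_X_le]
  have hT : 16 * (R / 2 + S) ≤ K * (12.5 / X + 0.2592) + 16 := by
    have : K / (0.96 * X) * 12 = K * (12.5 / X) := by field_simp; norm_num
    linarith [h.R_le, h.S_le, h.mul_W_le]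
  have hratio : (n * (16 * (R / 2 + S)) + K) / (n * K) ≤ 12.5 / X + 0.2635 := by
    rw [div_le_iff₀ (by positivity)]
    have := mul_le_mul_of_nonneg_left hT (by linarith : 0 ≤ n)
    nlinarith
  have hlog := log_le_exp_one_mul_sub_two
    (by positivity : 0 < (n * (16 * (R / 2 + S)) + K) / (n * K))
  rw [Real.log_div (by positivity) (by positivity),
    Real.log_mul (by positivity) (by positivity)] at hlog
  have hexp : Real.exp 1 * ((n * (16 * (R / 2 + S)) + K) / (n * K)) ≤
      2.71829 * (12.5 / X + 0.2635) := by
    gcongr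
    linarith [Real.exp_one_lt_d9]
  have : 2.71829 * (12.5 / X) ≤ 34 / X := by
    rw [← mul_div_assoc]
    gcongr
    norm_num
  linarith

theorem mul_R_mul_X_le : W / 4 * (R * X) ≤ K * (4.164 * (W ^ 2 / s)) := by
  have hs := h.s_gt
  have hW := h.W_gt
  have hX := h.le_X
  have hK := h.K_gt
  have hsX : s ^ 2 * X ≤ 11.1016 * (K * W) := by
    have : K * W * Real.log 16 ≤ K * W * 2.7726 := by
      gcongr
      exact log_sixteen_mem_Ioo.2.le
    have : 0 < K * W := by positivity
    linarith [h.le_mul]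
  calc W / 4 * (R * X) ≤ W / 4 * (1.5 * s * X) := by gcongr; exact h.R_le
    _ = 0.375 * (W / s) * (s ^ 2 * X) := by field_simp; norm_num
    _ ≤ 0.375 * (W / s) * (11.1016 * (K * W)) := by gcongr
    _ = 4.1631 * (K * (W ^ 2 / s)) := by ring
    _ ≤ K * (4.164 * (W ^ 2 / s)) := by
      rw [mul_left_comm K]
      gcongr
      norm_num

theorem mul_S_le : W / 4 * (2 * (16 * π) * S) ≤ K * (4.325 * (W ^ 2 / s) + 2.46 / X) := by
  have hs := h.s_gt
  have hW := h.W_gt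
  have hX := h.le_X
  have hK := h.K_gt
  have hS := h.S_nonneg
  calc W / 4 * (2 * (16 * π) * S) ≤ W / 4 * (2 * (16 * 3.14165) * (K * W / (5.812 * s) + 1)) := by
        gcongr
        · linarith [Real.pi_lt_d4]
        · exact h.S_le
    _ = K * (25.1332 / 5.812 * (W ^ 2 / s)) + 25.1332 * W := by field_simp; ring
    _ ≤ K * (4.325 * (W ^ 2 / s)) + K * (2.46 / X) := by
      refine add_le_add (by gcongr; norm_num) ?_
      rw [← mul_div_assoc, le_div_iff₀ (by positivity)]
      nlinarith [mul_le_mul_of_nonneg_right h.W_le_s (by linarith : 0 ≤ X), h.s_mul_X_le]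
    _ = K * (4.325 * (W ^ 2 / s) + 2.46 / X) := by ring

theorem W_mul_le {n : ℝ} (hn : 4096 ≤ n) (hH : H = 2 * Real.log n + 3.27)
    (hdet : K * W * (K * W - 1) / 2 * Real.log 16 ≤
      K * ((W ^ 2 - 1) / 4) * (R * X + 2 * (16 * π) * S) + K * W * (Real.log (K * W) + Real.log 2) +
        W * (K ^ 2 / 2 * (Real.log (n * (16 * (R / 2 + S)) + K) - Real.log K + 3 / 2))) :
    1.38629 * W ≤ 8.489 * (W ^ 2 / s) + H / 4 - 0.695 + 20 / X := by
  have hW := h.W_gt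
  have hX := h.le_X
  have hK := h.K_gt
  have hR := h.R_nonneg
  have hS := h.S_nonneg
  obtain ⟨h16, h16'⟩ := log_sixteen_mem_Ioo
  set Λ := Real.log (n * (16 * (R / 2 + S)) + K) - Real.log K
  have hKW : 0 < K * W := by positivity
  have hle : K * ((W ^ 2 - 1) / 4) * (R * X + 2 * (16 * π) * S) ≤
      K * (W ^ 2 / 4) * (R * X + 2 * (16 * π) * S) := by
    gcongr
    linarith
  have hdiv : (K * W - 1) / 2 * Real.log 16 ≤
      W / 4 * (R * X) + W / 4 * (2 * (16 * π) * S) + (Real.log (K * W) + Real.log 2) +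
        K / 2 * (Λ + 3 / 2) :=
    le_of_mul_le_mul_left (by linarith) hKW
  have hΛ_le : K / 2 * (Λ + 3 / 2) ≤ K / 2 * (Real.log n + 34 / X - 1.28 + 3 / 2) := by
    gcongr
    exact h.log_sub_log_le hn
  have hmul : K * (W * Real.log 16 / 2) ≤
      K * (8.489 * (W ^ 2 / s) + 2.46 / X + 0.0104 +
        (Real.log n + 34 / X - 1.28 + 3 / 2) / 2) := by
    linarith [h.mul_R_mul_X_le, h.mul_S_le, h.log_mul_add_log_two_le]
  have hfinal := le_of_mul_le_mul_left hmul (by linarith)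
  have h20 : 2.46 / X + 34 / X / 2 ≤ 20 / X := by
    rw [div_div, ← sub_nonneg]
    have : 20 / X - (2.46 / X + 34 / (X * 2)) = 0.54 / X := by field_simp; norm_num
    rw [this]
    positivity
  nlinarith

theorem not_W_mul_le (hcase : 4.58 * H ≤ s ∨ 100 ≤ X ∧ H ≤ 33.27) :
    8.489 * (W ^ 2 / s) + H / 4 - 0.695 + 20 / X < 1.38629 * W := by
  have hH := h.le_H
  have hX := h.le_X
  have hW := h.W_gt
  have hsq_le : ∀ c > 0, c * H ≤ s → c * (W ^ 2 / s) ≤ 0.688 * W - 0.118336 * H + 0.0503 := by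
    intro c hc hcH
    have hsq : (W - 0.344 * H) ^ 2 ≤ 1 := (sq_le_one_iff_abs_le_one _).2 <|
      abs_le.2 ⟨by linarith [h.le_W], by linarith [h.W_le]⟩
    calc c * (W ^ 2 / s) ≤ c * (W ^ 2 / (c * H)) := by gcongr
      _ = W ^ 2 / H := by field_simp
      _ ≤ 0.688 * W - 0.118336 * H + 0.0503 := by
        rw [div_le_iff₀ (by positivity)]
        nlinarith
  rcases hcase with hs | ⟨hX', hH'⟩
  · have h20 : 20 / X ≤ 20 / 50 := by gcongr
    linarith [hsq_le 4.58 (by norm_num) hs, h.le_W]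
  · have h20 : 20 / X ≤ 20 / 100 := by gcongr
    linarith [hsq_le 4.2118 (by norm_num) h.le_s, h.le_W, h.W_le]

end IsParameterChoice

theorem exists_nat_mul_le_lt {a b : ℝ} (ha : 0 ≤ a) (hb : 0 < b) :
    ∃ k : ℕ, k * b ≤ a ∧ a < (k + 1) * b :=
  ⟨⌊a / b⌋₊, (le_div_iff₀ hb).1 (Nat.floor_le (by positivity)),
    (div_lt_iff₀ hb).1 (Nat.lt_floor_add_one _)⟩

theorem exists_isParameterChoice {H s X : ℝ} (hH : 19.9 ≤ H) (hs : 4.2118 * H ≤ s) (hX : 50 ≤ X) :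
    ∃ K L R S : ℕ, 0 < K ∧ K * (2 * L + 1) ≤ (2 * R + 1) * (2 * S + 1) ∧
      IsParameterChoice H s X K (2 * L + 1) (L + R : ℕ) S := by
  obtain ⟨h16, h16'⟩ := log_sixteen_mem_Ioo
  have hs0 : 83.8 < s := by linarith
  obtain ⟨L, hL_le, hL_lt⟩ := exists_nat_mul_le_lt (by linarith : 0 ≤ 0.172 * H) one_pos
  obtain ⟨R', hR_le, hR_lt⟩ := exists_nat_mul_le_lt (by linarith : 0 ≤ 1.5 * s) one_pos
  obtain ⟨R, rfl⟩ : ∃ R, R' = L + R := by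
    refine Nat.exists_eq_add_of_le (Nat.lt_succ_iff.1 ?_)
    exact_mod_cast (by linarith : (L : ℝ) < R' + 1)
  have hW : 0 < (2 * L + 1) * Real.log 16 := by positivity
  have hW_le : (2 * L + 1) * Real.log 16 ≤ 0.26 * s :=
    calc (2 * L + 1) * Real.log 16 ≤ 0.0937 * s * 2.7726 := by gcongr; linarith
      _ ≤ 0.26 * s := by linarith
  have hM : 0.26 * s ≤ 0.001 * (s ^ 2 * X / 4) := by
    nlinarith [mul_le_mul hs0.le hX (by norm_num) (by linarith)]
  obtain ⟨K, hK_le, hK_lt⟩ := exists_nat_mul_le_lt (by linarith : 0 ≤ s ^ 2 * X / 4) hW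
  have hK_pos : 0 < K := Nat.pos_of_ne_zero fun h0 => by
    rw [h0, Nat.cast_zero] at hK_lt
    linarith
  obtain ⟨S, hS_le, hS_lt⟩ := exists_nat_mul_le_lt (by positivity : (0 : ℝ) ≤ K * (2 * L + 1))
    (by linarith : 0 < 5.812 * s)
  push_cast at hR_le hR_lt
  have hcard : (K * (2 * L + 1) : ℝ) ≤ (2 * R + 1) * (2 * (S + 1) + 1) := by
    have : 2.906 * s ≤ 2 * R + 1 := by linarith
    nlinarith
  refine ⟨K, L, R, S + 1, hK_pos, by exact_mod_cast hcard, hH, hs, hX, by linarith, by linarith,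
    by positivity, by push_cast; linarith, by positivity, ?_, by linarith, by linarith⟩
  push_cast
  gcongr
  rwa [le_div_iff₀ (by linarith)]

theorem mul_le_of_mul_sq_le {c H s X : ℝ} (hs : 0 ≤ s) (hX : 0 < X)
    (h : c ^ 2 * H ^ 2 * X ≤ s ^ 2 * X) : c * H ≤ s := by
  refine le_of_abs_le (abs_le_of_sq_le_sq ?_ hs)
  rw [mul_pow]
  exact le_of_mul_le_mul_right h hX

section

variable {n x : ℝ}

theorem le_of_mul_sq_le {H : ℝ} (hx : 0 < x) (hH : 17 ≤ H)
    (h : 8.87 * (10.98 * π + 1 / 2 * x) * H ^ 2 ≤ n / 4 * x) : 4096 ≤ n := by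
  have hle : 4096 / 4 * x ≤ n / 4 * x :=
    calc 4096 / 4 * x ≤ 8.87 * (10.98 * 0 + 1 / 2 * x) * 17 ^ 2 := by linarith
      _ ≤ 8.87 * (10.98 * π + 1 / 2 * x) * H ^ 2 := by gcongr; exact Real.pi_pos.le
      _ ≤ n / 4 * x := h
  linarith [le_of_mul_le_mul_right hle hx]

variable {s : ℝ} (hx : 0 < x) (hs : 0 ≤ s) (hsx : s ^ 2 * (16 * π + x) = n * x)
  (h : 8.87 * (10.98 * π + 1 / 2 * x) * (2 * Real.log n + 3.27) ^ 2 ≤ n / 4 * x)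

include hx hs hsx h

theorem mul_two_mul_log_add_le : 4.2118 * (2 * Real.log n + 3.27) ≤ s := by
  have hπ := Real.pi_pos
  refine mul_le_of_mul_sq_le hs (by positivity : 0 < 16 * π + x) ?_
  nlinarith [sq_nonneg (2 * Real.log n + 3.27)]

theorem mul_two_mul_log_add_le_or (hn : 0 < n) : 4.58 * (2 * Real.log n + 3.27) ≤ s ∨
    100 ≤ 16 * π + x ∧ 2 * Real.log n + 3.27 ≤ 33.27 := by
  obtain ⟨H, hH⟩ : ∃ H, H = 2 * Real.log n + 3.27 := ⟨_, rfl⟩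
  rw [← hH] at h ⊢
  have hπ := Real.pi_gt_d4
  have hX : 0 < 16 * π + x := by positivity
  rcases le_or_gt x 50 with hx50 | hx50
  · refine Or.inl (mul_le_of_mul_sq_le hs hX ?_)
    have : 21 * (16 * π + x) * H ^ 2 ≤ 17.74 * (21.96 * π + x) * H ^ 2 :=
      mul_le_mul_of_nonneg_right (by linarith) (sq_nonneg H)
    nlinarith [sq_nonneg H]
  rcases le_or_gt H 33.27 with hH' | hH'
  · exact Or.inr ⟨by linarith, hH'⟩
  · refine Or.inl (mul_le_of_mul_sq_le hs hX ?_)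
    have hn_ge : 42.2 * H ^ 2 ≤ n := by
      have := mul_sq_le_exp (by linarith : 15 ≤ Real.log n)
      rwa [Real.exp_log hn, ← hH] at this
    calc 4.58 ^ 2 * H ^ 2 * (16 * π + x) ≤ 42.2 * H ^ 2 * x := by
          have := Real.pi_lt_d4
          have := mul_nonneg (sq_nonneg H) (by linarith : 0 ≤ 42.2 * x - 4.58 ^ 2 * (16 * π + x))
          linarith
      _ ≤ n * x := by gcongr
      _ = s ^ 2 * (16 * π + x) := hsx.symm

end

theorem sixteen_pow_mul_le {H s X n δ : ℝ} {K L R S : ℕ}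
    (hp : IsParameterChoice H s X K (2 * L + 1) R S) (hδ : |δ| * Real.exp (s ^ 2 * X / 4) ≤ π)
    (hsn : s ^ 2 ≤ n) : 16 ^ (K * (2 * L + 1)) * (L * R * |δ|) ≤ n := by
  have hs := hp.s_gt
  have hpow : (16 : ℝ) ^ (K * (2 * L + 1)) ≤ Real.exp (s ^ 2 * X / 4) := by
    rw [← Real.exp_log (by norm_num : (0 : ℝ) < 16), ← Real.exp_nat_mul]
    exact Real.exp_le_exp.2 (by exact_mod_cast hp.mul_le)
  calc 16 ^ (K * (2 * L + 1)) * (L * R * |δ|)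
      ≤ Real.exp (s ^ 2 * X / 4) * (0.05 * s * (1.5 * s) * |δ|) := by
        gcongr
        · linarith [hp.W_le_s]
        · exact hp.R_le
    _ = 0.075 * s ^ 2 * (|δ| * Real.exp (s ^ 2 * X / 4)) := by ring
    _ ≤ 0.075 * s ^ 2 * 4 := by gcongr; exact hδ.trans Real.pi_lt_four.le
    _ ≤ n := by nlinarith

theorem IsNearRootOfUnity.mul_log_lt {q a m : ℤ} {α : ℂ} {n : ℕ} {δ : ℝ}
    (h : IsNearRootOfUnity (α / starRingEnd ℂ α) n m δ) (hα : IsOrdinaryRoot q a α) (hq : 2 ≤ q)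
    (hδ : |δ| * Real.exp (n / 4 * Real.log q) ≤ π) (hn : (4096 : ℝ) ≤ n) :
    n / 4 * Real.log q <
      8.87 * (10.98 * π + 1 / 2 * Real.log q) * (2 * Real.log n + 3.27) ^ 2 := by
  by_contra! hle
  have hx : 0 < Real.log q := Real.log_pos (by exact_mod_cast hq)
  have hπ := Real.pi_gt_d4
  have hX : 0 < 16 * π + Real.log q := by positivity
  obtain ⟨s, hs⟩ : ∃ s, s = √(n * Real.log q / (16 * π + Real.log q)) := ⟨_, rfl⟩
  have hs0 : 0 ≤ s := hs ▸ Real.sqrt_nonneg _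
  have hsx : s ^ 2 * (16 * π + Real.log q) = n * Real.log q := by
    rw [hs, Real.sq_sqrt (by positivity), div_mul_cancel₀ _ hX.ne']
  have hsn : s ^ 2 ≤ n := le_of_mul_le_mul_right (by nlinarith) hX
  have hlog : 8.317 ≤ Real.log n := by
    have := Real.log_le_log (by norm_num) hn
    rw [show (4096 : ℝ) = 2 ^ 12 by norm_num, Real.log_pow] at this
    push_cast at this
    linarith [Real.log_two_gt_d9]
  obtain ⟨K, L, R, S, hK, hcard, hp⟩ := exists_isParameterChoice (by linarith)
    (mul_two_mul_log_add_le hx hs0 hsx hle) (by linarith : 50 ≤ 16 * π + Real.log q)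
  have hRn : 2 * (L + R) + 1 ≤ n := by
    have : (2 * (L + R : ℕ) + 1 : ℝ) ≤ n := by nlinarith [hp.s_gt, hp.R_le]
    exact_mod_cast this
  have hM : (n : ℝ) / 4 * Real.log q = s ^ 2 * (16 * π + Real.log q) / 4 := by linarith
  have hdet := choose_two_mul_log_le_of_isNearRootOfUnity hα (by lia) h hK le_rfl hRn hcard
    (by norm_num : (1 : ℝ) ≤ 16) (sixteen_pow_mul_le hp (hM ▸ hδ) hsn) rfl rfl
  refine (hp.not_W_mul_le (mul_two_mul_log_add_le_or hx hs0 hsx hle (by linarith))).not_ge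
    (hp.W_mul_le hn rfl ?_)
  push_cast at hdet ⊢
  linarith

end ParameterChoice

/-- For an ordinary pair `(q, a₁)`, if `−aₙ = ⌊2·q^{n/2}⌋` for some positive
integer `n`, then `(n/4)·log q < 8.87·(10.98·π + (1/2)·log q)·(max{17, 2·log n + 3.27})² + log(π/3)`. -/
theorem ordinary_degree_bound (q a1 : ℤ) (hq : 2 ≤ q) (ha1 : a1 ^ 2 ≤ 4 * q)
    (α β : ℂ) (hα : α ^ 2 - a1 * α + q = 0) (him : 0 ≤ α.im)
    (hβ : β = α / (Real.sqrt q : ℂ))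
    (hord : ¬ ∃ k : ℕ, 0 < k ∧ β ^ k = 1)
    (a : ℕ → ℤ) (ha : ∀ n : ℕ, (a n : ℂ) = α ^ n + (starRingEnd ℂ) α ^ n)
    (n : ℕ) (hn : 0 < n) (hmax : -(a n) = ⌊2 * Real.sqrt q ^ n⌋) :
    (n : ℝ) / 4 * Real.log q <
      8.87 * (10.98 * Real.pi + 1 / 2 * Real.log q) *
        (max 17 (2 * Real.log n + 3.27)) ^ 2 + Real.log (Real.pi / 3) := by
  by_contra! hle
  have hlogq : 0 < Real.log q := Real.log_pos (by exact_mod_cast hq)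
  have hlogπ : 0 ≤ Real.log (Real.pi / 3) := Real.log_nonneg (by linarith [Real.pi_gt_three])
  have hn4096 : 4096 ≤ (n : ℝ) :=
    le_of_mul_sq_le hlogq (le_max_left 17 (2 * Real.log n + 3.27)) (by linarith)
  have hα' : IsOrdinaryRoot q a1 α := .of_sq_sub_mul_add_eq_zero (by lia) ha1 hα fun h =>
    hord (hβ ▸ isOfFinOrder_iff_pow_eq_one.1 h)
  have hnorm : ‖α‖ = √q := by rw [← hα'.norm_sq, Real.sqrt_sq (norm_nonneg α)]
  have hαn : α ^ n + starRingEnd ℂ α ^ n = -⌊2 * ‖α‖ ^ n⌋ := by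
    rw [← ha, hnorm, ← hmax, Int.cast_neg, neg_neg]
  obtain ⟨m, δ, hroot, hδ⟩ := hα'.exists_isNearRootOfUnity hq hn hαn
  have hlt := hroot.mul_log_lt hα' hq hδ hn4096
  have hmono : (2 * Real.log n + 3.27) ^ 2 ≤ (max 17 (2 * Real.log n + 3.27)) ^ 2 :=
    pow_le_pow_left₀ (by linarith [Real.log_natCast_nonneg n]) (le_max_right _ _) 2
  have := mul_le_mul_of_nonneg_left hmono
    (by positivity : 0 ≤ 8.87 * (10.98 * Real.pi + 1 / 2 * Real.log q))
  linarith
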